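/- Let d ≥ 3 and ε ∈ (0,1), and let B = B(0,N^{1−ε/2}) ⊂ T. There is a constant c = c(d,ε) > 0 such that for all sufficiently large N (depending on d,ε): sup_{x,y ∈ T∖B} | P_x[ Y_{t_*} = y | H_B > t_* ] − σ(y) | ≤ e^{−c (log N)²}, where t_* = (N log N)² and σ is the quasistationary distribution on T∖B. -/

import Mathlib

open MeasureTheory Filter Classical
open scoped ENNReal NNReal

noncomputable section

namespace Frag

/-! ### Graph-theoretic basics -/

/-- Two vertices of `Fin d → R` are adjacent if they differ in exactly one
coordinate, by `±1` (Euclidean distance one). -/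
def adj {d : ℕ} {R : Type*} [AddGroupWithOne R] (x y : Fin d → R) : Prop :=
  x ≠ y ∧ ∃ i : Fin d, (y i = x i + 1 ∨ x i = y i + 1) ∧ ∀ j : Fin d, j ≠ i → x j = y j

/-- The discrete torus `(ℤ/Nℤ)^d`. -/
abbrev Torus (d N : ℕ) := Fin d → ZMod N

/-- The lattice `ℤ^d`. -/
abbrev Lat (d : ℕ) := Fin d → ℤ

instance (n : ℕ) : MeasurableSpace (ZMod n) := ⊤

/-- The `ℓ∞`-distance on the torus. -/
def torusDist {d N : ℕ} (x y : Torus d N) : ℕ :=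
  Finset.univ.sup fun i : Fin d => min (x i - y i).val (y i - x i).val

/-- The `ℓ∞`-distance on the lattice. -/
def latDist {d : ℕ} (x y : Lat d) : ℕ :=
  Finset.univ.sup fun i : Fin d => (x i - y i).natAbs

/-- Closed `ℓ∞`-ball in the torus. -/
def torusBall {d N : ℕ} (x : Torus d N) (r : ℝ) : Set (Torus d N) :=
  {y | (torusDist x y : ℝ) ≤ r}

/-- Closed `ℓ∞`-ball in the lattice. -/
def latBall {d : ℕ} (x : Lat d) (r : ℝ) : Set (Lat d) :=
  {y | (latDist x y : ℝ) ≤ r}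

/-- `x` and `y` are connected by a nearest-neighbour path staying in `S`. -/
def connectedIn {α : Type*} (rel : α → α → Prop) (S : Set α) (x y : α) : Prop :=
  ∃ (n : ℕ) (p : ℕ → α), p 0 = x ∧ p n = y ∧ (∀ k, k ≤ n → p k ∈ S) ∧
    ∀ k, k < n → rel (p k) (p (k + 1))

/-- The connected component of `x` inside `S`. -/
def compOf {α : Type*} (rel : α → α → Prop) (S : Set α) (x : α) : Set α :=
  {y | connectedIn rel S x y}

/-- `S` is a connected set. -/
def IsConnSet {α : Type*} (rel : α → α → Prop) (S : Set α) : Prop :=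
  ∀ x ∈ S, ∀ y ∈ S, connectedIn rel S x y

/-- External vertex boundary. -/
def extBdry {α : Type*} (rel : α → α → Prop) (S : Set α) : Set α :=
  {y | y ∉ S ∧ ∃ x ∈ S, rel x y}

/-- Internal vertex boundary. -/
def intBdry {α : Type*} (rel : α → α → Prop) (S : Set α) : Set α :=
  {x | x ∈ S ∧ ∃ y, y ∉ S ∧ rel x y}

/-- The cardinality of the largest connected component of `S`. -/
def maxCompSize {α : Type*} (rel : α → α → Prop) (S : Set α) : ℕ :=
  sSup {n | ∃ x ∈ S, n = (compOf rel S x).ncard}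

/-- The diameter of a set with respect to a distance. -/
def diamOf {α : Type*} (dist : α → α → ℕ) (S : Set α) : ℕ :=
  sSup {n | ∃ x ∈ S, ∃ y ∈ S, n = dist x y}

/-- The canonical graph isomorphism `φ` from `B(0, N/4) ⊆ (ℤ/Nℤ)^d` onto
`B(0, N/4) ⊆ ℤ^d`, given by the signed representative of each coordinate. -/
def torusToLat {d N : ℕ} (x : Torus d N) : Lat d :=
  fun i => if ((x i).val : ℝ) ≤ (N : ℝ) / 2 then ((x i).val : ℤ) else ((x i).val : ℤ) - (N : ℤ)

/-! ### Discrete-time simple random walk -/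

/-- One-step transition probability of the simple random walk. -/
def srwStep {d : ℕ} {R : Type*} [AddGroupWithOne R] (x y : Fin d → R) : ℝ≥0∞ :=
  if adj x y then ((2 * d : ℕ) : ℝ≥0∞)⁻¹ else 0

/-- `μ` is the law on path space of the discrete-time simple random walk with
initial distribution `init`, characterized by its cylinder probabilities. -/
def IsWalkLaw {d : ℕ} {R : Type*} [AddGroupWithOne R] [MeasurableSpace R]
    (μ : Measure (ℕ → (Fin d → R))) (init : (Fin d → R) → ℝ≥0∞) : Prop :=
  IsProbabilityMeasure μ ∧
  ∀ (n : ℕ) (w : ℕ → (Fin d → R)),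
    μ {ω | ∀ k, k ≤ n → ω k = w k} =
      init (w 0) * ∏ k ∈ Finset.range n, srwStep (w k) (w (k + 1))

/-- The uniform initial distribution on the torus. -/
def unifInit (d N : ℕ) : Torus d N → ℝ≥0∞ := fun _ => ((N : ℝ≥0∞) ^ d)⁻¹

/-- The initial distribution concentrated at `x`. -/
def pointInit {α : Type*} (x : α) : α → ℝ≥0∞ := fun y => if y = x then 1 else 0

/-- The set of sites visited in the first `t` steps. -/
def visited {α : Type*} (t : ℕ) (ω : ℕ → α) : Set α := {v | ∃ k, k ≤ t ∧ ω k = v}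

/-! ### Capacity and random interlacements on `ℤ^d` -/

/-- The event that the walk never returns to `V` after time `0`. -/
def escEvent {d : ℕ} (V : Set (Lat d)) : Set (ℕ → Lat d) :=
  {w | ∀ n, 1 ≤ n → w n ∉ V}

/-- `r` is the (simple random walk) capacity of `V ⊆ ℤ^d`:
`r = Σ_{x ∈ V} P_x[H̃_V = ∞]`. -/
def IsCap (d : ℕ) (V : Set (Lat d)) (r : ℝ) : Prop :=
  ∃ μ : Lat d → Measure (ℕ → Lat d),
    (∀ x, IsWalkLaw (μ x) (pointInit x)) ∧
    r = ∑ᶠ x ∈ V, ((μ x) (escEvent V)).toReal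

/-- `I` is a random interlacement at level `u` on the probability space `(Ω, P)`:
for every finite `V ⊆ ℤ^d`, `P[I ∩ V = ∅] = exp (−u · cap V)`. -/
def IsInterlacement (d : ℕ) (u : ℝ) {Ω : Type*} [MeasurableSpace Ω]
    (P : Measure Ω) (I : Ω → Set (Lat d)) : Prop :=
  IsProbabilityMeasure P ∧
  (∀ x : Lat d, MeasurableSet {ω | x ∈ I ω}) ∧
  ∀ V : Set (Lat d), V.Finite → ∀ r : ℝ, IsCap d V r →
    P {ω | ∀ x ∈ V, x ∉ I ω} = ENNReal.ofReal (Real.exp (-u * r))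

/-- `e = η(u)`, the probability that the origin lies in an infinite component of
the vacant set `V^u = ℤ^d ∖ I^u` of a random interlacement at level `u`. -/
def IsEta (d : ℕ) (u e : ℝ) : Prop :=
  ∃ (Ω : Type) (_ : MeasurableSpace Ω) (P : Measure Ω) (I : Ω → Set (Lat d)),
    IsInterlacement d u P I ∧
    e = (P {ω | (compOf adj ((I ω)ᶜ) (0 : Lat d)).Infinite}).toReal

/-- The critical level `u_* = inf {u ≥ 0 : η(u) = 0}`. -/
def uStar (d : ℕ) : ℝ := sInf {u | 0 ≤ u ∧ IsEta d u 0}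

/-- The probability of an event `E` about a random interlacement at level `u`. -/
def intProb (d : ℕ) (u : ℝ) (E : Set (Lat d) → Prop) : ℝ :=
  sSup {p | ∃ (Ω : Type) (_ : MeasurableSpace Ω) (P : Measure Ω) (I : Ω → Set (Lat d)),
    IsInterlacement d u P I ∧ p = (P {ω | E (I ω)}).toReal}

/-- The event that `B(0,L)` is connected to the external boundary of `B(0,2L)`
by a nearest-neighbour path in `S`. -/
def connAcross (d L : ℕ) (S : Set (Lat d)) : Prop :=
  ∃ x ∈ latBall (0 : Lat d) (L : ℝ), ∃ y ∈ extBdry adj (latBall (0 : Lat d) (2 * (L : ℝ))),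
    connectedIn adj S x y

/-- The critical level `u_** = inf {u ≥ 0 : α(u) > 0}`. -/
def uStarStar (d : ℕ) : ℝ :=
  sInf {u | 0 ≤ u ∧ ∃ a : ℝ, 0 < a ∧
    Tendsto (fun L : ℕ => (L : ℝ) ^ a * intProb d u fun I => connAcross d L Iᶜ)
      atTop (nhds 0)}

/-- `u` is a strongly supercritical level for random interlacements on `ℤ^d`. -/
def StronglySupercritical (d : ℕ) (u : ℝ) : Prop :=
  ∃ μ : ℝ, 0 < μ ∧
  ∃ (Ω : Type) (_ : MeasurableSpace Ω) (P : Measure Ω) (I : ℝ → Ω → Set (Lat d)),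
    (∀ v : ℝ, 0 ≤ v → IsInterlacement d v P (I v)) ∧
    (∀ v v' : ℝ, v ≤ v' → ∀ ω, I v ω ⊆ I v' ω) ∧
    ∃ N₀ : ℕ, ∀ N : ℕ, N₀ ≤ N →
      (1 - Real.exp (-(N : ℝ) ^ μ) ≤
        (P {ω | ∃ x ∈ latBall (0 : Lat d) (N : ℝ),
          (compOf adj ((I (u * (1 + μ)) ω)ᶜ) x).Infinite}).toReal) ∧
      (1 - Real.exp (-(N : ℝ) ^ μ) ≤
        (P {ω | ∀ S₁ S₂ : Set (Lat d),
            S₁ ⊆ (I (u * (1 - μ)) ω)ᶜ ∩ latBall 0 (N : ℝ) →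
            S₂ ⊆ (I (u * (1 - μ)) ω)ᶜ ∩ latBall 0 (N : ℝ) →
            IsConnSet adj S₁ → IsConnSet adj S₂ →
            (N : ℝ) / 8 ≤ (diamOf latDist S₁ : ℝ) →
            (N : ℝ) / 8 ≤ (diamOf latDist S₂ : ℝ) →
            ∃ x ∈ S₁, ∃ y ∈ S₂,
              connectedIn adj ((I (u * (1 + μ)) ω)ᶜ ∩ latBall 0 (2 * (N : ℝ))) x y}).toReal)

/-! ### Continuous-time walk -/

/-- Sample space for the continuous-time walk: a discrete path together with
the i.i.d. exponential interarrival gaps of the driving Poisson process. -/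
abbrev CTPath (d N : ℕ) := (ℕ → Torus d N) × (ℕ → ℝ)

/-- The number of jumps performed up to time `t`. -/
def nJumps (g : ℕ → ℝ) (t : ℝ) : ℕ := sSup {n | ∑ k ∈ Finset.range n, g k ≤ t}

/-- The position of the continuous-time walk at time `t`. -/
def ctPos {d N : ℕ} (ω : CTPath d N) (t : ℝ) : Torus d N := ω.1 (nJumps ω.2 t)

/-- `ν` is the law of an i.i.d. sequence of exponential random variables of
parameter `1`, characterized by its joint survival function. -/
def IsIIDExp (ν : Measure (ℕ → ℝ)) : Prop :=
  IsProbabilityMeasure ν ∧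
  ∀ (n : ℕ) (s : ℕ → ℝ), (∀ k, 0 ≤ s k) →
    ν {g | ∀ k, k ≤ n → s k < g k} =
      ENNReal.ofReal (Real.exp (-(∑ k ∈ Finset.range (n + 1), s k)))

/-- `P` is the law of the continuous-time simple random walk `Y_t = X_{N_t}`
with initial distribution `init`. -/
def IsCTWalk {d N : ℕ} (P : Measure (CTPath d N)) (init : Torus d N → ℝ≥0∞) : Prop :=
  ∃ (μ : Measure (ℕ → Torus d N)) (ν : Measure (ℕ → ℝ)),
    IsWalkLaw μ init ∧ IsIIDExp ν ∧ P = μ.prod ν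

/-- The entrance time `H_V = inf {t ≥ 0 : Y_t ∈ V}`. -/
def hitT {d N : ℕ} (V : Set (Torus d N)) (ω : CTPath d N) : ℝ :=
  sInf {t | 0 ≤ t ∧ ctPos ω t ∈ V}

/-- The entrance time to `V` after time `s`. -/
def hitTAfter {d N : ℕ} (V : Set (Torus d N)) (ω : CTPath d N) (s : ℝ) : ℝ :=
  sInf {t | s ≤ t ∧ ctPos ω t ∈ V}

/-- The exit time `T_V = inf {t ≥ 0 : Y_t ∉ V}`. -/
def exitT {d N : ℕ} (V : Set (Torus d N)) (ω : CTPath d N) : ℝ :=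
  sInf {t | 0 ≤ t ∧ ctPos ω t ∉ V}

/-- The regeneration time `t_* = (N log N)^2`. -/
def tstar (N : ℕ) : ℝ := ((N : ℝ) * Real.log N) ^ 2

/-- The first time `t ≥ s + t_*` such that the walk has avoided `B` during the
whole interval `[t − t_*, t]`. -/
def uEndAfter {d N : ℕ} (B : Set (Torus d N)) (ω : CTPath d N) (s : ℝ) : ℝ :=
  sInf {t | s + tstar N ≤ t ∧ ∀ r, t - tstar N ≤ r → r ≤ t → ctPos ω r ∉ B}

/-- The successive excursion times `(R_k, U_k)` between `A` and (long absences
from) `B`, with the convention `(R_0, U_0) = (0, 0)`. -/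
def excTimes {d N : ℕ} (A B : Set (Torus d N)) (ω : CTPath d N) : ℕ → ℝ × ℝ
  | 0 => (0, 0)
  | k + 1 =>
      let R := hitTAfter A ω (excTimes A B ω k).2
      (R, uEndAfter B ω R)

/-- The range of the continuous-time walk during the time interval `[a, b]`. -/
def ctRange {d N : ℕ} (ω : CTPath d N) (a b : ℝ) : Set (Torus d N) :=
  {v | ∃ t, a ≤ t ∧ t ≤ b ∧ ctPos ω t = v}

/-! ### The killed walk and the quasistationary distribution -/

/-- The action of the substochastic matrix `P^B` (walk killed on `B`) on a
vector `v`. -/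
def killedMul (d N : ℕ) (B : Set (Torus d N)) (v : Torus d N → ℝ) (x : Torus d N) : ℝ :=
  ∑ᶠ y : Torus d N, if y ∉ B ∧ adj x y then v y / (2 * d) else 0

/-- `l` is an eigenvalue of the killed transition matrix `P^B`. -/
def IsKilledEigenvalue (d N : ℕ) (B : Set (Torus d N)) (l : ℝ) : Prop :=
  ∃ v : Torus d N → ℝ, v ≠ 0 ∧ (∀ x ∈ B, v x = 0) ∧
    ∀ x, x ∉ B → killedMul d N B v x = l * v x

/-- `σ` is the quasistationary distribution on `T ∖ B`: the normalized
non-negative principal (Perron–Frobenius) eigenvector of `P^B`. -/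
def IsQSD (d N : ℕ) (B : Set (Torus d N)) (σ : Torus d N → ℝ) : Prop :=
  (∀ x, 0 ≤ σ x) ∧ (∀ x ∈ B, σ x = 0) ∧ (∑ᶠ x, σ x = 1) ∧
  ∃ l : ℝ, (∀ x, x ∉ B → killedMul d N B σ x = l * σ x) ∧
    ∀ l', IsKilledEigenvalue d N B l' → l' ≤ l

/-- The Dirichlet form of the simple random walk on the torus. -/
def dirichlet (d N : ℕ) (g : Torus d N → ℝ) : ℝ :=
  (1 / 2) * ∑ᶠ x : Torus d N, ∑ᶠ y : Torus d N,
    if adj x y then (g x - g y) ^ 2 / (2 * d * (N : ℝ) ^ d) else 0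

end Frag

/-! Expand the law of the walk killed on `B` spectrally: it is the quasistationary component plus a
remainder governed by the second eigenvalue of `P^B`. A function vanishing on `B` and orthogonal to
`σ` becomes, after subtracting a multiple of `σ`, a mean-zero function on the torus, so the
remainder decays at least at the rate `(1 - cos (2π/N)) / d` of the slowest Fourier mode of the
whole torus.

As for the survival probability, `x ∉ B` has a coordinate outside `[-R, R]`, and the walk killed on
`B` survives at least as long as the one killed when this coordinate enters `[-R, R]`; the sine wave
on the slab of width `N - 2R` shows that it dies at rate at most `(1 - cos (π/(N - 2R))) / d`. As
`2π/N` exceeds `π/(N - 2R)` by a constant factor once `R/N` stays below a constant less than `1/4`,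
the two rates differ by a multiple of `N⁻²`, which over the time `(N log N)²` yields
`exp (-c (log N)²)` and absorbs the polynomial prefactors. -/

namespace Frag

/-! ### A Poincaré inequality on finite abelian groups -/

section Fourier

variable {G : Type*} [AddCommGroup G] [Fintype G]

lemma sum_shift {M : Type*} [AddCommMonoid M] (f : G → M) (u : G) :
    ∑ x, f (x + u) = ∑ x, f x :=
  Equiv.sum_comp (Equiv.addRight u) f

/-- The unnormalized Fourier coefficient of `f` at the character `ψ`. -/
def fourierSum (f : G → ℝ) (ψ : AddChar G ℂ) : ℂ := ∑ x, ψ x * f x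

lemma fourierSum_zero (f : G → ℝ) : fourierSum f 0 = ((∑ x, f x : ℝ) : ℂ) := by
  simp [fourierSum]

lemma norm_fourierSum_sub_shift (f : G → ℝ) (u : G) (ψ : AddChar G ℂ) :
    ‖fourierSum (fun x => f (x + u) - f x) ψ‖ = ‖ψ u - 1‖ * ‖fourierSum f ψ‖ := by
  have hshift : ∑ x, ψ x * (f (x + u) : ℂ) = ψ (-u) * fourierSum f ψ := by
    rw [fourierSum, ← sum_shift (fun x => ψ x * (f x : ℂ)) u, Finset.mul_sum]
    refine Finset.sum_congr rfl fun x _ => ?_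
    rw [← mul_assoc, ← AddChar.map_add_eq_mul, add_comm x u, neg_add_cancel_left]
  have hnorm : ‖ψ (-u) - 1‖ = ‖ψ u - 1‖ := by
    rw [AddChar.map_neg_eq_conj, ← RCLike.norm_conj (ψ u - 1), map_sub, map_one]
  rw [← hnorm, ← norm_mul, sub_mul, one_mul, ← hshift, fourierSum, fourierSum,
    ← Finset.sum_sub_distrib]
  simp only [Complex.ofReal_sub, mul_sub]

lemma sum_norm_fourierSum_sq (f : G → ℝ) :
    ∑ ψ, ‖fourierSum f ψ‖ ^ 2 = Fintype.card G * ∑ x, f x ^ 2 := by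
  have hexpand : ∀ ψ : AddChar G ℂ, ((‖fourierSum f ψ‖ ^ 2 : ℝ) : ℂ) =
      ∑ x, ∑ y, ψ (x - y) * (f x * f y) := by
    intro ψ
    rw [Complex.ofReal_pow, ← Complex.mul_conj', fourierSum, map_sum, Finset.sum_mul_sum]
    refine Finset.sum_congr rfl fun x _ => Finset.sum_congr rfl fun y _ => ?_
    rw [map_mul, Complex.conj_ofReal, ← AddChar.map_neg_eq_conj, mul_mul_mul_comm,
      ← AddChar.map_add_eq_mul, sub_eq_add_neg]
  rw [← Complex.ofReal_inj, Complex.ofReal_sum, Finset.sum_congr rfl fun ψ _ => hexpand ψ,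
    Finset.sum_comm]
  simp_rw [Finset.sum_comm (s := (Finset.univ : Finset (AddChar G ℂ))), ← Finset.sum_mul,
    AddChar.sum_apply_eq_ite, sub_eq_zero, ite_mul, zero_mul, Finset.sum_ite_eq,
    Finset.mem_univ, if_true, ← pow_two]
  push_cast
  rw [Finset.mul_sum]

lemma poincare_of_le_sum_norm_sub_one_sq {ι : Type*} [Fintype ι] (e : ι → G) {c : ℝ}
    (hc : ∀ ψ : AddChar G ℂ, ψ ≠ 0 → c ≤ ∑ i, ‖ψ (e i) - 1‖ ^ 2) (f : G → ℝ) :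
    c * (∑ x, f x ^ 2 - (∑ x, f x) ^ 2 / Fintype.card G) ≤
      ∑ i, ∑ x, (f (x + e i) - f x) ^ 2 := by
  have hcard : (0 : ℝ) < Fintype.card G := by exact_mod_cast Fintype.card_pos
  have hmodes : ∑ ψ ∈ Finset.univ.erase 0, ‖fourierSum f ψ‖ ^ 2 =
      Fintype.card G * (∑ x, f x ^ 2 - (∑ x, f x) ^ 2 / Fintype.card G) := by
    rw [mul_sub, mul_div_cancel₀ _ hcard.ne', ← sum_norm_fourierSum_sq,
      Finset.sum_erase_eq_sub (Finset.mem_univ _), fourierSum_zero, Complex.norm_real,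
      Real.norm_eq_abs, sq_abs]
  have henergy : Fintype.card G * ∑ i, ∑ x, (f (x + e i) - f x) ^ 2 =
      ∑ ψ, (∑ i, ‖ψ (e i) - 1‖ ^ 2) * ‖fourierSum f ψ‖ ^ 2 := by
    rw [Finset.mul_sum]
    simp_rw [← sum_norm_fourierSum_sq, norm_fourierSum_sub_shift, mul_pow, Finset.sum_mul]
    exact Finset.sum_comm
  refine le_of_mul_le_mul_left ?_ hcard
  calc Fintype.card G * (c * (∑ x, f x ^ 2 - (∑ x, f x) ^ 2 / Fintype.card G))
      = ∑ ψ ∈ Finset.univ.erase 0, c * ‖fourierSum f ψ‖ ^ 2 := by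
        rw [← Finset.mul_sum, hmodes, mul_left_comm]
    _ ≤ ∑ ψ ∈ Finset.univ.erase 0, (∑ i, ‖ψ (e i) - 1‖ ^ 2) * ‖fourierSum f ψ‖ ^ 2 := by
        gcongr with ψ hψ
        exact hc ψ (Finset.ne_of_mem_erase hψ)
    _ ≤ ∑ ψ, (∑ i, ‖ψ (e i) - 1‖ ^ 2) * ‖fourierSum f ψ‖ ^ 2 :=
        Finset.sum_le_sum_of_subset_of_nonneg (Finset.erase_subset _ _) fun _ _ _ => by positivity
    _ = _ := henergy.symm

end Fourier

lemma two_sub_two_mul_cos_le_norm_sub_one_sq {n : ℕ} (hn : n ≠ 0) {ω : ℂ} (hω : ω ^ n = 1)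
    (hω1 : ω ≠ 1) : 2 - 2 * Real.cos (2 * Real.pi / n) ≤ ‖ω - 1‖ ^ 2 := by
  have hnorm : ‖ω‖ = 1 := Complex.norm_eq_one_of_pow_eq_one hω hn
  have hω0 : ω ≠ 0 := fun h => by simp [h] at hnorm
  have hexp : Complex.exp (ω.arg * Complex.I) = ω := by
    simpa [hnorm] using Complex.norm_mul_exp_arg_mul_I ω
  obtain ⟨k, hk⟩ : ∃ k : ℤ, n * ω.arg = k * (2 * Real.pi) := by
    rw [← hexp, ← Complex.exp_nat_mul, Complex.exp_eq_one_iff] at hω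
    obtain ⟨k, hk⟩ := hω
    refine ⟨k, Complex.ofReal_injective (mul_right_cancel₀ Complex.I_ne_zero ?_)⟩
    push_cast
    linear_combination hk
  have harg : 2 * Real.pi / n ≤ |ω.arg| := by
    have hn' : (0 : ℝ) < n := by exact_mod_cast Nat.pos_of_ne_zero hn
    have hk0 : k ≠ 0 := by
      rintro rfl
      have : ω.arg = 0 := by simpa [hn] using hk
      exact hω1 (by simpa [this] using hexp.symm)
    have hk1 : (1 : ℝ) ≤ |(k : ℝ)| := by exact_mod_cast Int.one_le_abs hk0
    rw [div_le_iff₀' hn', ← abs_of_pos hn', ← abs_mul, hk, abs_mul,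
      abs_of_pos Real.two_pi_pos]
    exact le_mul_of_one_le_left Real.two_pi_pos.le hk1
  have hre : ω.re ≤ Real.cos (2 * Real.pi / n) := by
    rw [← div_one ω.re, ← hnorm, ← Complex.cos_arg hω0, ← Real.cos_abs]
    exact Real.cos_le_cos_of_nonneg_of_le_pi (by positivity) (Complex.abs_arg_le_pi ω) harg
  have hsq : ‖ω - 1‖ ^ 2 = 2 - 2 * ω.re := by
    rw [← Complex.normSq_eq_norm_sq, Complex.normSq_sub, Complex.normSq_eq_norm_sq, hnorm]
    simp
    ring
  linarith

/-! ### The driving Poisson process -/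

instance isProbabilityMeasure_expMeasure_one :
    IsProbabilityMeasure (ProbabilityTheory.expMeasure 1) :=
  ProbabilityTheory.isProbabilityMeasure_expMeasure one_pos

lemma expMeasure_one_Ioi (s : ℝ) :
    ProbabilityTheory.expMeasure 1 (Set.Ioi s) = ENNReal.ofReal (Real.exp (-max s 0)) := by
  have hcdf := ProbabilityTheory.cdf_expMeasure_eq (r := 1) one_pos s
  rw [ProbabilityTheory.cdf_eq_real] at hcdf
  rw [← ofReal_measureReal, ← Set.compl_Iic, probReal_compl_eq_one_sub measurableSet_Iic, hcdf]
  split_ifs with hs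
  · simp [max_eq_left hs]
  · simp [max_eq_right (not_le.mp hs).le]

lemma IsIIDExp.ae_pos {ν : Measure (ℕ → ℝ)} (hν : IsIIDExp ν) : ∀ᵐ g ∂ν, ∀ k, 0 < g k := by
  have := hν.1
  refine ae_all_iff.mpr fun k => ?_
  have hk : ν {g | ∀ j, j ≤ k → 0 < g j} = 1 := by
    simpa using hν.2 k (fun _ => 0) fun _ => le_rfl
  have hmeas : MeasurableSet {g : ℕ → ℝ | ∀ j, j ≤ k → 0 < g j} := by measurability
  filter_upwards [(mem_ae_iff_prob_eq_one hmeas).mpr hk] with g hg using hg k le_rfl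

lemma IsIIDExp.measure_pi_Ioi {ν : Measure (ℕ → ℝ)} (hν : IsIIDExp ν) (n : ℕ)
    (a : Fin (n + 1) → ℝ) :
    ν {g | ∀ i : Fin (n + 1), a i < g i} =
      ∏ i, ProbabilityTheory.expMeasure 1 (Set.Ioi (a i)) := by
  let b : ℕ → ℝ := fun k => if h : k < n + 1 then max (a ⟨k, h⟩) 0 else 0
  have hb : ∀ i : Fin (n + 1), b i = max (a i) 0 := fun i => dif_pos i.2
  have hb_nonneg : ∀ k, 0 ≤ b k := fun k => by
    dsimp only [b]; split_ifs <;> simp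
  have hae : {g : ℕ → ℝ | ∀ i : Fin (n + 1), a i < g i} =ᵐ[ν] {g | ∀ k, k ≤ n → b k < g k} := by
    filter_upwards [hν.ae_pos] with g hg
    refine propext ⟨fun h k hk => ?_, fun h i => ?_⟩
    · lift k to Fin (n + 1) using Nat.lt_succ_of_le hk
      exact (hb k).trans_lt (max_lt (h k) (hg k))
    · exact (le_max_left _ _).trans_lt ((hb i).symm.trans_lt (h i (Nat.le_of_lt_succ i.2)))
  rw [measure_congr hae, hν.2 n b hb_nonneg, Finset.sum_range, ← Finset.sum_neg_distrib,
    Real.exp_sum, ENNReal.ofReal_prod_of_nonneg fun _ _ => (Real.exp_pos _).le]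
  simp_rw [hb, expMeasure_one_Ioi]

lemma IsIIDExp.map_fin {ν : Measure (ℕ → ℝ)} (hν : IsIIDExp ν) (n : ℕ) :
    ν.map (fun g (i : Fin (n + 1)) => g i) =
      Measure.pi fun _ => ProbabilityTheory.expMeasure 1 := by
  have := hν.1
  have hmeas : Measurable fun (g : ℕ → ℝ) (i : Fin (n + 1)) => g i := by fun_prop
  refine (Measure.pi_eq_generateFrom (C := fun _ => Set.range Set.Ioi)
    (fun _ => (borel_eq_generateFrom_Ioi ℝ).symm.trans (BorelSpace.measurable_eq (α := ℝ)).symm)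
    (fun _ => isPiSystem_Ioi)
    (fun _ => ⟨fun m => Set.Ioi (-(m : ℝ)), fun m => ⟨_, rfl⟩, fun m => measure_lt_top _ _, ?_⟩)
    fun s hs => ?_).symm
  · refine Set.iUnion_eq_univ_iff.mpr fun x => ?_
    obtain ⟨m, hm⟩ := exists_nat_gt (-x)
    exact ⟨m, neg_lt.mp hm⟩
  · choose a ha using hs
    obtain rfl : (fun i => Set.Ioi (a i)) = s := funext ha
    rw [Measure.map_apply hmeas (MeasurableSet.univ_pi fun _ => measurableSet_Ioi),
      ← hν.measure_pi_Ioi]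
    simp [Set.pi]

/-- The probability `e^{-t} tⁿ / n!` that a rate-one Poisson process has made exactly `n` jumps
by time `t`. -/
def poissonWeight (t : ℝ) (n : ℕ) : ℝ := Real.exp (-t) * (t ^ n / n.factorial)

lemma poissonWeight_nonneg {t : ℝ} (ht : 0 ≤ t) (n : ℕ) : 0 ≤ poissonWeight t n := by
  unfold poissonWeight; positivity

lemma hasSum_poissonWeight_mul_pow (t q : ℝ) :
    HasSum (fun n => poissonWeight t n * q ^ n) (Real.exp (-((1 - q) * t))) := by
  have hterm : (fun n => poissonWeight t n * q ^ n) =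
      fun n => Real.exp (-t) * ((t * q) ^ n / n.factorial) := by
    ext n
    rw [poissonWeight, mul_pow]
    ring
  have h := (NormedSpace.expSeries_div_hasSum_exp (t * q)).mul_left (Real.exp (-t))
  rw [← Real.exp_eq_exp_ℝ, ← Real.exp_add, show -t + t * q = -((1 - q) * t) by ring] at h
  rw [hterm]
  exact h

lemma hasSum_poissonWeight (t : ℝ) : HasSum (poissonWeight t) 1 := by
  simpa using hasSum_poissonWeight_mul_pow t 1

lemma exponentialPDF_mul_poissonWeight_sub (n : ℕ) (t s : ℝ) :
    ProbabilityTheory.exponentialPDF 1 s *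
        (if 0 ≤ t - s then ENNReal.ofReal (poissonWeight (t - s) n) else 0) =
      (Set.Icc 0 t).indicator
        (fun s => ENNReal.ofReal (Real.exp (-t) * ((t - s) ^ n / n.factorial))) s := by
  rw [ProbabilityTheory.exponentialPDF_eq]
  by_cases hs : 0 ≤ s
  · by_cases hst : s ≤ t
    · rw [if_pos hs, if_pos (sub_nonneg.mpr hst), Set.indicator_of_mem (Set.mem_Icc.mpr ⟨hs, hst⟩),
        ← ENNReal.ofReal_mul (by positivity), poissonWeight, one_mul, one_mul, ← mul_assoc,
        ← Real.exp_add]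
      congr 3
      ring
    · rw [if_neg (mt sub_nonneg.mp hst), mul_zero, Set.indicator_of_notMem fun h => hst h.2]
  · rw [if_neg hs, ENNReal.ofReal_zero, zero_mul, Set.indicator_of_notMem fun h => hs h.1]

lemma lintegral_poissonWeight_sub (n : ℕ) (t : ℝ) :
    ∫⁻ s, (if 0 ≤ t - s then ENNReal.ofReal (poissonWeight (t - s) n) else 0)
      ∂(ProbabilityTheory.expMeasure 1) =
    if 0 ≤ t then ENNReal.ofReal (poissonWeight t (n + 1)) else 0 := by
  have hmeas : Measurable fun s : ℝ =>
      if 0 ≤ t - s then ENNReal.ofReal (poissonWeight (t - s) n) else 0 := by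
    refine Measurable.ite (measurableSet_le measurable_const (by fun_prop)) ?_ measurable_const
    unfold poissonWeight
    fun_prop
  have hpdf : ProbabilityTheory.expMeasure 1 =
      volume.withDensity (ProbabilityTheory.exponentialPDF 1) := rfl
  have hpdf_meas : Measurable (ProbabilityTheory.exponentialPDF 1) :=
    (ProbabilityTheory.measurable_exponentialPDFReal 1).ennreal_ofReal
  rw [hpdf, lintegral_withDensity_eq_lintegral_mul _ hpdf_meas hmeas]
  simp only [Pi.mul_apply, exponentialPDF_mul_poissonWeight_sub]
  rw [lintegral_indicator measurableSet_Icc]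
  split_ifs with ht
  · have hcont : Continuous fun s : ℝ => Real.exp (-t) * ((t - s) ^ n / n.factorial) := by fun_prop
    rw [← ofReal_integral_eq_lintegral_ofReal hcont.integrableOn_Icc
      ((ae_restrict_mem measurableSet_Icc).mono fun s hs => mul_nonneg (Real.exp_nonneg _)
        (div_nonneg (pow_nonneg (sub_nonneg.mpr hs.2) n) n.factorial.cast_nonneg)),
      integral_Icc_eq_integral_Ioc, ← intervalIntegral.integral_of_le ht,
      intervalIntegral.integral_const_mul, intervalIntegral.integral_div,
      intervalIntegral.integral_comp_sub_left (fun x => x ^ n) t, integral_pow, poissonWeight,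
      Nat.factorial_succ]
    push_cast
    field_simp
    simp
  · rw [Set.Icc_eq_empty (by linarith)]
    simp

lemma measurableSet_le_and_lt {α : Type*} [MeasurableSpace α] {f h : α → ℝ} (hf : Measurable f)
    (hh : Measurable h) (t : ℝ) : MeasurableSet {a | f a ≤ t ∧ t < h a} :=
  (measurableSet_le hf measurable_const).inter (measurableSet_lt measurable_const hh)

lemma pi_expMeasure_jumps (n : ℕ) (t : ℝ) :
    Measure.pi (fun _ : Fin (n + 1) => ProbabilityTheory.expMeasure 1)
      {g | ∑ i : Fin n, g i.castSucc ≤ t ∧ t < ∑ i, g i} =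
    if 0 ≤ t then ENNReal.ofReal (poissonWeight t n) else 0 := by
  induction n generalizing t with
  | zero =>
    have hset : {g : Fin (0 + 1) → ℝ | ∑ i : Fin 0, g i.castSucc ≤ t ∧ t < ∑ i, g i} =
        Set.univ.pi fun _ => if 0 ≤ t then Set.Ioi t else ∅ := by
      ext g
      split_ifs with h <;> simp [Set.mem_pi, h]
    rw [hset, Measure.pi_pi]
    split_ifs with h
    · simp [expMeasure_one_Ioi, max_eq_left h, poissonWeight]
    · simp
  | succ n ih =>
    have hmeas : MeasurableSet {g : Fin (n + 1 + 1) → ℝ |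
        ∑ i : Fin (n + 1), g i.castSucc ≤ t ∧ t < ∑ i, g i} :=
      measurableSet_le_and_lt (by fun_prop) (by fun_prop) t
    -- Condition on the first interarrival time `s`.
    have hsplit := (measurePreserving_piFinSuccAbove
      (fun _ : Fin (n + 1 + 1) => ProbabilityTheory.expMeasure 1) 0).symm
    rw [← hsplit.measure_preimage hmeas.nullMeasurableSet,
      Measure.prod_apply (hsplit.measurable hmeas), ← lintegral_poissonWeight_sub]
    refine lintegral_congr fun s => ?_
    rw [← ih (t - s)]
    congr 1
    ext g
    simp only [Set.mem_preimage, Set.mem_ofPred_eq, MeasurableEquiv.piFinSuccAbove_symm_apply]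
    rw [Fin.sum_univ_succ, Fin.sum_univ_succ (n := n + 1)]
    simp only [Fin.insertNthEquiv_apply, Fin.insertNth_zero, Fin.castSucc_zero,
      Fin.cons_zero, Fin.cons_succ, ← Fin.succ_castSucc]
    exact and_congr le_sub_iff_add_le'.symm sub_lt_iff_lt_add'.symm

/-- The event that the process with interarrival times `g` makes exactly `n` jumps up to time
`t`, for positive `g`. -/
def jumpEvent (n : ℕ) (t : ℝ) : Set (ℕ → ℝ) :=
  {g | ∑ k ∈ Finset.range n, g k ≤ t ∧ t < ∑ k ∈ Finset.range (n + 1), g k}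

lemma measurableSet_jumpEvent (n : ℕ) (t : ℝ) : MeasurableSet (jumpEvent n t) :=
  measurableSet_le_and_lt (by fun_prop) (by fun_prop) t

lemma IsIIDExp.measure_jumpEvent {ν : Measure (ℕ → ℝ)} (hν : IsIIDExp ν) (n : ℕ) {t : ℝ}
    (ht : 0 ≤ t) : ν (jumpEvent n t) = ENNReal.ofReal (poissonWeight t n) := by
  have h := pi_expMeasure_jumps n t
  rw [← hν.map_fin n, if_pos ht, Measure.map_apply (by fun_prop)
    (measurableSet_le_and_lt (by fun_prop) (by fun_prop) t)] at h
  simpa only [jumpEvent, Set.preimage_ofPred_eq, Finset.sum_range, Fin.val_castSucc] using h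

lemma strictMono_sum_range_of_pos {g : ℕ → ℝ} (hg : ∀ k, 0 < g k) :
    StrictMono fun n => ∑ k ∈ Finset.range n, g k :=
  strictMono_nat_of_lt_succ fun n => by
    rw [Finset.sum_range_succ]; linarith [hg n]

lemma le_of_sum_range_le {g : ℕ → ℝ} (hg : ∀ k, 0 < g k) {t : ℝ} {m n : ℕ}
    (hm : ∑ k ∈ Finset.range m, g k ≤ t) (hn : t < ∑ k ∈ Finset.range (n + 1), g k) : m ≤ n :=
  Nat.le_of_lt_succ ((strictMono_sum_range_of_pos hg).lt_iff_lt.mp (hm.trans_lt hn))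

lemma nJumps_le {g : ℕ → ℝ} (hg : ∀ k, 0 < g k) {t : ℝ} {n : ℕ}
    (hn : t < ∑ k ∈ Finset.range (n + 1), g k) : nJumps g t ≤ n :=
  csSup_le' fun _ hm => le_of_sum_range_le hg hm hn

lemma nJumps_eq_of_mem_jumpEvent {g : ℕ → ℝ} (hg : ∀ k, 0 < g k) {t : ℝ} {n : ℕ}
    (h : g ∈ jumpEvent n t) : nJumps g t = n :=
  (nJumps_le hg h.2).antisymm (le_csSup ⟨n, fun _ hm => le_of_sum_range_le hg hm h.2⟩ h.1)

lemma IsIIDExp.ae_exists_mem_jumpEvent {ν : Measure (ℕ → ℝ)} (hν : IsIIDExp ν) {t : ℝ}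
    (ht : 0 ≤ t) : ∀ᵐ g ∂ν, ∃ n, g ∈ jumpEvent n t := by
  have := hν.1
  have hdisj : Pairwise (Function.onFun (AEDisjoint ν) fun n => jumpEvent n t) := fun i j hij =>
    measure_mono_null (t := {g | ¬ ∀ k, 0 < g k})
      (fun g hg hpos => hij ((nJumps_eq_of_mem_jumpEvent hpos hg.1).symm.trans
        (nJumps_eq_of_mem_jumpEvent hpos hg.2))) (ae_iff.mp hν.ae_pos)
  have hmeas := fun n => measurableSet_jumpEvent n t
  have hunion : ν (⋃ n, jumpEvent n t) = 1 := by
    rw [measure_iUnion₀ hdisj fun n => (hmeas n).nullMeasurableSet]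
    simp_rw [hν.measure_jumpEvent _ ht]
    rw [← ENNReal.ofReal_tsum_of_nonneg (poissonWeight_nonneg ht)
      (hasSum_poissonWeight t).summable, (hasSum_poissonWeight t).tsum_eq, ENNReal.ofReal_one]
  filter_upwards [(mem_ae_iff_prob_eq_one (MeasurableSet.iUnion hmeas)).mpr hunion] with g hg
  exact Set.mem_iUnion.mp hg

/-! ### Nearest-neighbour averages on the torus -/

lemma adj_comm {d : ℕ} {R : Type*} [AddGroupWithOne R] (x y : Fin d → R) :
    adj x y ↔ adj y x := by
  have hsymm : ∀ {u v : Fin d → R}, adj u v → adj v u := fun ⟨hne, i, hi, hj⟩ =>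
    ⟨hne.symm, i, hi.symm, fun j hji => (hj j hji).symm⟩
  exact ⟨hsymm, hsymm⟩

lemma adj_iff_exists_single {d : ℕ} {R : Type*} [AddCommGroupWithOne R] [NeZero (1 : R)]
    (x y : Fin d → R) :
    adj x y ↔ ∃ i, y = x + Pi.single i 1 ∨ y = x - Pi.single i 1 := by
  have hcoord : ∀ (u v : Fin d → R) (i : Fin d),
      v = u + Pi.single i 1 ↔ v i = u i + 1 ∧ ∀ j, j ≠ i → u j = v j := by
    refine fun u v i => ⟨?_, fun ⟨hi, hj⟩ => funext fun j => ?_⟩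
    · rintro rfl
      simp +contextual
    · rcases eq_or_ne j i with rfl | hji
      · simpa using hi
      · simp [hji, hj j hji]
  have hiff : ∀ i, (y i = x i + 1 ∨ x i = y i + 1) ∧ (∀ j, j ≠ i → x j = y j) ↔
      y = x + Pi.single i 1 ∨ y = x - Pi.single i 1 := fun i => by
    rw [eq_sub_iff_add_eq, eq_comm (b := x), hcoord, hcoord, or_and_right]
    simp only [eq_comm (a := y _)]
  simp only [adj, hiff, and_iff_right_iff_imp]
  rintro ⟨i, h | h⟩ rfl <;> simpa using (congrFun h i).symm

lemma injective_single_sign {ι R : Type*} [DecidableEq ι] [AddGroupWithOne R] [NeZero (1 : R)]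
    (h : (1 : R) ≠ -1) :
    Function.Injective fun p : ι × Bool => (Pi.single p.1 (if p.2 then 1 else -1) : ι → R) := by
  have hne : ∀ b : Bool, (if b then 1 else -1 : R) ≠ 0 := by simp
  rintro ⟨i, b⟩ ⟨j, c⟩ hij
  dsimp only at hij
  obtain rfl : i = j := by
    by_contra hne'
    have := congrFun hij i
    rw [Pi.single_eq_same, Pi.single_eq_of_ne hne'] at this
    exact hne b this
  have := Pi.single_injective i hij
  cases b <;> cases c <;> simp_all [eq_comm]

lemma sum_adj {d N : ℕ} [NeZero N] (hN : 3 ≤ N) (x : Torus d N) {M : Type*} [AddCommMonoid M]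
    (f : Torus d N → M) :
    ∑ y, (if adj x y then f y else 0) =
      ∑ i, (f (x + Pi.single i 1) + f (x - Pi.single i 1)) := by
  have : Fact (2 < N) := ⟨hN⟩
  have : Fact (1 < N) := ⟨by omega⟩
  let neighbour : Fin d × Bool → Torus d N := fun p => x + Pi.single p.1 (if p.2 then 1 else -1)
  have hinj : Function.Injective neighbour :=
    (add_right_injective x).comp (injective_single_sign ZMod.neg_one_ne_one.symm)
  have himage : Finset.univ.filter (adj x) = Finset.univ.image neighbour := by
    ext y
    simp only [Finset.mem_filter, Finset.mem_univ, true_and, Finset.mem_image, Prod.exists,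
      Bool.exists_bool, adj_iff_exists_single]
    refine exists_congr fun i => ?_
    simp [neighbour, sub_eq_add_neg, Pi.single_neg, or_comm, eq_comm (b := y)]
  rw [← Finset.sum_filter, himage, Finset.sum_image hinj.injOn, Fintype.sum_prod_type]
  simp [neighbour, sub_eq_add_neg, Pi.single_neg]

/-- The mean of `f` over the `2d` neighbours of `x`, i.e. the transition operator of the simple
random walk. -/
def avg {d N : ℕ} (f : Torus d N → ℝ) (x : Torus d N) : ℝ :=
  (∑ i, (f (x + Pi.single i 1) + f (x - Pi.single i 1))) / (2 * d)

lemma avg_add {d N : ℕ} (f g : Torus d N → ℝ) : avg (f + g) = avg f + avg g := by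
  ext x
  simp only [avg, Pi.add_apply, ← add_div, ← Finset.sum_add_distrib, add_add_add_comm]

lemma avg_smul {d N : ℕ} (c : ℝ) (f : Torus d N → ℝ) : avg (c • f) = c • avg f := by
  ext x
  simp only [avg, Pi.smul_apply, smul_eq_mul, ← mul_add, ← Finset.mul_sum, mul_div_assoc]

lemma avg_nonneg {d N : ℕ} {f : Torus d N → ℝ} (hf : ∀ x, 0 ≤ f x) (x : Torus d N) :
    0 ≤ avg f x :=
  div_nonneg (Finset.sum_nonneg fun _ _ => add_nonneg (hf _) (hf _)) (by positivity)

lemma sum_avg_mul {d N : ℕ} [NeZero N] (f g : Torus d N → ℝ) :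
    ∑ x, avg f x * g x = ∑ x, f x * avg g x := by
  simp_rw [avg, div_mul_eq_mul_div, mul_div_assoc', ← Finset.sum_div, Finset.sum_mul,
    Finset.mul_sum, add_mul, mul_add]
  rw [Finset.sum_comm, Finset.sum_comm (γ := Torus d N)]
  congr 1
  refine Finset.sum_congr rfl fun i _ => ?_
  have hright := sum_shift (fun x : Torus d N => f x * g (x - Pi.single i 1)) (Pi.single i 1)
  have hleft := sum_shift (fun x : Torus d N => f (x - Pi.single i 1) * g x) (Pi.single i 1)
  simp only [add_sub_cancel_right] at hright hleft
  rw [Finset.sum_add_distrib, Finset.sum_add_distrib, hright, ← hleft, add_comm]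

/-- The sum of the squared increments of `f` over the edges of the torus. -/
def edgeEnergy {d N : ℕ} [NeZero N] (f : Torus d N → ℝ) : ℝ :=
  ∑ i, ∑ x, (f (x + Pi.single i 1) - f x) ^ 2

lemma sum_mul_sub_avg {d N : ℕ} [NeZero N] (hd : d ≠ 0) (f : Torus d N → ℝ) :
    ∑ x, f x * (f x - avg f x) = edgeEnergy f / (2 * d) := by
  have hlocal : ∀ x, f x * (f x - avg f x) =
      (∑ i : Fin d, (2 * f x ^ 2 - f (x + Pi.single i 1) * f x -
        f x * f (x - Pi.single i 1))) / (2 * d) := fun x => by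
    have hd' : (d : ℝ) ≠ 0 := by exact_mod_cast hd
    simp only [avg, Finset.sum_sub_distrib, Finset.sum_add_distrib, ← Finset.sum_mul,
      ← Finset.mul_sum, Finset.sum_const, Finset.card_univ, Fintype.card_fin, nsmul_eq_mul]
    field_simp
    ring
  simp_rw [hlocal]
  rw [← Finset.sum_div, Finset.sum_comm, edgeEnergy]
  congr 1
  refine Finset.sum_congr rfl fun i _ => ?_
  have hcross := sum_shift (fun x : Torus d N => f x * f (x - Pi.single i 1)) (Pi.single i 1)
  have hsq := sum_shift (fun x : Torus d N => f x ^ 2) (Pi.single i 1)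
  simp only [add_sub_cancel_right] at hcross
  simp_rw [sub_sq, Finset.sum_sub_distrib, Finset.sum_add_distrib, Finset.sum_sub_distrib,
    mul_assoc, ← Finset.mul_sum]
  rw [← hcross, hsq]
  ring

lemma exists_apply_single_ne_one {d N : ℕ} [NeZero N] {ψ : AddChar (Torus d N) ℂ} (hψ : ψ ≠ 0) :
    ∃ i, ψ (Pi.single i 1) ≠ 1 := by
  contrapose! hψ
  ext x
  have hx : x = ∑ i, (x i).val • (Pi.single i 1 : Torus d N) := by
    refine (Finset.univ_sum_single x).symm.trans (Finset.sum_congr rfl fun i _ => ?_)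
    rw [← Pi.single_smul, nsmul_one, ZMod.natCast_zmod_val]
  have hmul : ψ x = ∏ i, ψ ((x i).val • Pi.single i 1) := by
    nth_rw 1 [hx]
    exact map_prod ψ.toMonoidHom (fun i => Multiplicative.ofAdd _) _
  simp only [hmul, AddChar.map_nsmul_eq_pow, hψ, one_pow, Finset.prod_const_one,
    AddChar.zero_apply]

lemma torus_poincare {d N : ℕ} [NeZero N] (f : Torus d N → ℝ) :
    (2 - 2 * Real.cos (2 * Real.pi / N)) * (∑ x, f x ^ 2 - (∑ x, f x) ^ 2 / N ^ d) ≤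
      edgeEnergy f := by
  have hcard : (Fintype.card (Torus d N) : ℝ) = N ^ d := by simp
  rw [← hcard]
  refine poincare_of_le_sum_norm_sub_one_sq (fun i : Fin d => (Pi.single i 1 : Torus d N))
    (fun ψ hψ => ?_) f
  obtain ⟨i, hi⟩ := exists_apply_single_ne_one hψ
  have hroot : ψ (Pi.single i 1) ^ N = 1 := by
    rw [← AddChar.map_nsmul_eq_pow, ← Pi.single_smul, nsmul_one, ZMod.natCast_self,
      Pi.single_zero, AddChar.map_zero_eq_one]
  exact (two_sub_two_mul_cos_le_norm_sub_one_sq (NeZero.ne N) hroot hi).trans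
    (Finset.single_le_sum (f := fun j => ‖ψ (Pi.single j 1) - 1‖ ^ 2)
      (fun _ _ => by positivity) (Finset.mem_univ i))

/-- The rate at which the simple random walk on a `d`-dimensional torus damps a wave of frequency
`a` in a single coordinate. -/
def modeRate (d : ℕ) (a : ℝ) : ℝ := (1 - Real.cos a) / d

lemma sum_mul_avg_le {d N : ℕ} [NeZero N] (hd : d ≠ 0) (f : Torus d N → ℝ) :
    ∑ x, f x * avg f x ≤ ∑ x, f x ^ 2 -
      modeRate d (2 * Real.pi / N) * (∑ x, f x ^ 2 - (∑ x, f x) ^ 2 / N ^ d) := by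
  have : (0 : ℝ) < d := by exact_mod_cast Nat.pos_of_ne_zero hd
  have henergy := sum_mul_sub_avg hd f
  simp_rw [mul_sub, Finset.sum_sub_distrib, ← pow_two] at henergy
  have hpoincare := div_le_div_of_nonneg_right (torus_poincare f) (by positivity : (0 : ℝ) ≤ 2 * d)
  rw [← henergy] at hpoincare
  have hrate : (2 - 2 * Real.cos (2 * Real.pi / N)) *
      (∑ x, f x ^ 2 - (∑ x, f x) ^ 2 / N ^ d) / (2 * d) =
      modeRate d (2 * Real.pi / N) * (∑ x, f x ^ 2 - (∑ x, f x) ^ 2 / N ^ d) := by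
    rw [modeRate]
    field_simp
  linarith

/-! ### The transition operator of the killed walk -/

/-- The transition operator `avg` of the simple random walk killed on `B`, extended by zero to
`B`. -/
def killAvg {d N : ℕ} (B : Set (Torus d N)) (f : Torus d N → ℝ) : Torus d N → ℝ :=
  Bᶜ.indicator (avg (Bᶜ.indicator f))

lemma indicator_compl_eq_self {α M : Type*} [Zero M] {B : Set α} {f : α → M}
    (hf : ∀ x ∈ B, f x = 0) : Bᶜ.indicator f = f :=
  Set.indicator_eq_self.mpr fun _ hx hxB => hx (hf _ hxB)

lemma killAvg_of_mem {d N : ℕ} {B : Set (Torus d N)} (f : Torus d N → ℝ) {x : Torus d N}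
    (hx : x ∈ B) : killAvg B f x = 0 :=
  Set.indicator_of_notMem (Set.notMem_compl_iff.mpr hx) _

lemma killAvg_eq_avg {d N : ℕ} {B : Set (Torus d N)} {f : Torus d N → ℝ}
    (hf : ∀ x ∈ B, f x = 0) {x : Torus d N} (hx : x ∉ B) : killAvg B f x = avg f x := by
  rw [killAvg, indicator_compl_eq_self hf, Set.indicator_of_mem hx]

lemma killAvg_nonneg {d N : ℕ} (B : Set (Torus d N)) {f : Torus d N → ℝ} (hf : ∀ x, 0 ≤ f x)
    (x : Torus d N) : 0 ≤ killAvg B f x :=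
  Set.indicator_nonneg (fun _ _ => avg_nonneg (Set.indicator_nonneg fun _ _ => hf _) _) x

lemma killedMul_eq_killAvg {d N : ℕ} [NeZero N] (hN : 3 ≤ N) {B : Set (Torus d N)}
    (f : Torus d N → ℝ) {x : Torus d N} (hx : x ∉ B) : killedMul d N B f x = killAvg B f x := by
  rw [killedMul, killAvg, Set.indicator_of_mem hx, avg, finsum_eq_sum_of_fintype,
    ← sum_adj hN, Finset.sum_div]
  refine Finset.sum_congr rfl fun y _ => ?_
  by_cases hy : y ∈ B <;> by_cases hxy : adj x y <;> simp [hy, hxy]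

lemma sum_killAvg_mul {d N : ℕ} [NeZero N] (B : Set (Torus d N)) (f g : Torus d N → ℝ) :
    ∑ x, killAvg B f x * g x = ∑ x, f x * killAvg B g x := by
  have hmove : ∀ u v : Torus d N → ℝ,
      ∑ x, Bᶜ.indicator u x * v x = ∑ x, u x * Bᶜ.indicator v x := fun u v =>
    Finset.sum_congr rfl fun x _ => by by_cases hx : x ∈ B <;> simp [hx]
  simp only [killAvg, hmove, sum_avg_mul]

/-- The transition operator of the killed walk on `ℓ²` of the torus. -/
def killOp {d N : ℕ} [NeZero N] (B : Set (Torus d N)) :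
    EuclideanSpace ℝ (Torus d N) →L[ℝ] EuclideanSpace ℝ (Torus d N) :=
  LinearMap.toContinuousLinearMap
    { toFun := fun f => WithLp.toLp 2 (killAvg B f.ofLp)
      map_add' := fun f g => by
        simp only [killAvg, WithLp.ofLp_add, Set.indicator_add', avg_add, WithLp.toLp_add]
      map_smul' := fun c f => by
        have hind : ∀ g : Torus d N → ℝ, Bᶜ.indicator (c • g) = c • Bᶜ.indicator g :=
          Set.indicator_const_smul Bᶜ c
        simp only [killAvg, WithLp.ofLp_smul, hind, avg_smul, WithLp.toLp_smul, RingHom.id_apply] }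

lemma killOp_apply {d N : ℕ} [NeZero N] (B : Set (Torus d N)) (f : EuclideanSpace ℝ (Torus d N))
    (x : Torus d N) : killOp B f x = killAvg B f.ofLp x := rfl

lemma inner_eq_sum {ι : Type*} [Fintype ι] (f g : EuclideanSpace ℝ ι) :
    inner ℝ f g = ∑ x, f x * g x := by
  simp [PiLp.inner_apply, mul_comm]

lemma isSymmetric_killOp {d N : ℕ} [NeZero N] (B : Set (Torus d N)) :
    (killOp B : EuclideanSpace ℝ (Torus d N) →ₗ[ℝ] EuclideanSpace ℝ (Torus d N)).IsSymmetric := by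
  intro f g
  rw [inner_eq_sum, inner_eq_sum]
  exact sum_killAvg_mul B f.ofLp g.ofLp

lemma inner_killOp_self {d N : ℕ} [NeZero N] {B : Set (Torus d N)}
    {f : EuclideanSpace ℝ (Torus d N)} (hf : ∀ x ∈ B, f x = 0) :
    inner ℝ f (killOp B f) = ∑ x, f x * avg f.ofLp x := by
  rw [inner_eq_sum]
  refine Finset.sum_congr rfl fun x _ => ?_
  by_cases hx : x ∈ B
  · rw [hf x hx, zero_mul, zero_mul]
  · rw [killOp_apply, killAvg_eq_avg hf hx]

/-- The weight that the walk started at `x` and killed on `B` gives to `y` after `n` steps. -/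
def killProb {d N : ℕ} [NeZero N] (B : Set (Torus d N)) (n : ℕ) (x y : Torus d N) : ℝ :=
  (killOp B ^ n) (EuclideanSpace.single x 1) y

lemma killProb_zero {d N : ℕ} [NeZero N] (B : Set (Torus d N)) (x y : Torus d N) :
    killProb B 0 x y = if y = x then 1 else 0 := by
  simp [killProb, PiLp.single_apply]

lemma killProb_succ {d N : ℕ} [NeZero N] (B : Set (Torus d N)) (n : ℕ) (x : Torus d N) :
    killProb B (n + 1) x = killAvg B (killProb B n x) := by
  ext y
  rw [killProb, pow_succ', mul_apply_eq_comp, killOp_apply]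
  rfl

lemma killProb_nonneg {d N : ℕ} [NeZero N] (B : Set (Torus d N)) (n : ℕ) (x y : Torus d N) :
    0 ≤ killProb B n x y := by
  induction n generalizing y with
  | zero => rw [killProb_zero]; positivity
  | succ n ih => rw [killProb_succ]; exact killAvg_nonneg B ih y

lemma killProb_of_mem {d N : ℕ} [NeZero N] {B : Set (Torus d N)} {x : Torus d N} (hx : x ∉ B)
    (n : ℕ) {y : Torus d N} (hy : y ∈ B) : killProb B n x y = 0 := by
  cases n with
  | zero => rw [killProb_zero, if_neg (ne_of_mem_of_not_mem hy hx)]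
  | succ n => rw [killProb_succ, killAvg_of_mem _ hy]

/-! ### The law of the killed discrete walk -/

lemma IsWalkLaw.measure_cylinder_succ {d : ℕ} {R : Type*} [AddGroupWithOne R] [MeasurableSpace R]
    {μ : Measure (ℕ → Fin d → R)} {init : (Fin d → R) → ℝ≥0∞} (hμ : IsWalkLaw μ init) (n : ℕ)
    (w : ℕ → Fin d → R) (y : Fin d → R) :
    μ ({ω | ∀ k, k ≤ n → ω k = w k} ∩ {ω | ω (n + 1) = y}) =
      μ {ω | ∀ k, k ≤ n → ω k = w k} * srwStep (w n) y := by
  obtain ⟨w', hlast, hw'⟩ : ∃ w' : ℕ → Fin d → R, w' (n + 1) = y ∧ ∀ k, k ≤ n → w' k = w k :=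
    ⟨Function.update w (n + 1) y, Function.update_self .., fun k hk =>
      Function.update_of_ne (by omega) _ _⟩
  have hcyl : {ω : ℕ → Fin d → R | ∀ k, k ≤ n → ω k = w k} ∩ {ω | ω (n + 1) = y} =
      {ω | ∀ k, k ≤ n + 1 → ω k = w' k} := by
    ext ω
    simp only [Set.mem_inter_iff, Set.mem_ofPred_eq, Nat.le_succ_iff, or_imp, forall_and,
      forall_eq]
    refine and_congr (forall₂_congr fun k hk => by rw [hw' k hk]) ?_
    rw [Nat.succ_eq_add_one, hlast]
  have hprod : ∏ k ∈ Finset.range n, srwStep (w' k) (w' (k + 1)) =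
      ∏ k ∈ Finset.range n, srwStep (w k) (w (k + 1)) := by
    refine Finset.prod_congr rfl fun k hk => ?_
    rw [Finset.mem_range] at hk
    rw [hw' k hk.le, hw' (k + 1) hk]
  rw [hcyl, hμ.2, hμ.2, Finset.prod_range_succ, ← mul_assoc, hprod, hw' 0 n.zero_le, hw' n le_rfl,
    hlast]

lemma measure_eq_sum_cylinder {α : Type*} [Fintype α] [MeasurableSpace α]
    [MeasurableSingletonClass α] (μ : Measure (ℕ → α)) (n : ℕ) (A : Set (ℕ → α)) :
    μ A = ∑ v : Fin (n + 1) → α, μ ({ω | ∀ i : Fin (n + 1), ω i = v i} ∩ A) := by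
  have hmeas : Measurable fun (ω : ℕ → α) (i : Fin (n + 1)) => ω i := by fun_prop
  have hfiber := fun v : Fin (n + 1) → α => hmeas (measurableSet_singleton v)
  have hsum := sum_measure_preimage_singleton (μ := μ.restrict A) Finset.univ fun v _ => hfiber v
  rw [Finset.coe_univ, Set.preimage_univ, Measure.restrict_apply_univ] at hsum
  rw [← hsum]
  refine Finset.sum_congr rfl fun v _ => ?_
  rw [Measure.restrict_apply (hfiber v)]
  congr 2
  ext ω
  exact funext_iff

lemma IsWalkLaw.measure_inter_step {d N : ℕ} [NeZero N] {μ : Measure (ℕ → Torus d N)}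
    {init : Torus d N → ℝ≥0∞} (hμ : IsWalkLaw μ init) {n : ℕ} {z : Torus d N}
    {A : Set (ℕ → Torus d N)} (hA : DependsOn (· ∈ A) (Set.Iic n)) (hAz : ∀ ω ∈ A, ω n = z)
    (y : Torus d N) : μ (A ∩ {ω | ω (n + 1) = y}) = μ A * srwStep z y := by
  rw [measure_eq_sum_cylinder μ n A, measure_eq_sum_cylinder μ n (A ∩ _), Finset.sum_mul]
  refine Finset.sum_congr rfl fun v _ => ?_
  rw [← Set.inter_assoc]
  rcases Set.eq_empty_or_nonempty ({ω | ∀ i : Fin (n + 1), ω i = v i} ∩ A) with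
    hempty | ⟨ω₀, hω₀, hω₀A⟩
  · simp [hempty]
  · have hcyl : {ω | ∀ i : Fin (n + 1), ω i = v i} ∩ A = {ω | ∀ k, k ≤ n → ω k = ω₀ k} := by
      ext ω
      refine ⟨fun hω k hk => ?_, fun hω => ⟨fun i => ?_, ?_⟩⟩
      · have hk' := Nat.lt_succ_of_le hk
        exact (hω.1 ⟨k, hk'⟩).trans (hω₀ ⟨k, hk'⟩).symm
      · exact (hω i (Nat.le_of_lt_succ i.2)).trans (hω₀ i)
      · exact (hA fun k hk => hω k hk).mpr hω₀A
    rw [hcyl, hμ.measure_cylinder_succ, hAz ω₀ hω₀A]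

lemma sum_ofReal_mul_srwStep {d N : ℕ} [NeZero N] (hN : 3 ≤ N) {f : Torus d N → ℝ}
    (hf : ∀ x, 0 ≤ f x) (y : Torus d N) :
    ∑ z, ENNReal.ofReal (f z) * srwStep z y = ENNReal.ofReal (avg f y) := by
  have hterm : ∀ z, ENNReal.ofReal (f z) * srwStep z y =
      ENNReal.ofReal (if adj y z then f z / (2 * d) else 0) := fun z => by
    rw [srwStep, adj_comm z y]
    split_ifs with hadj
    · have hd : 0 < d := hadj.2.choose.pos
      rw [div_eq_mul_inv, ENNReal.ofReal_mul (hf z), ENNReal.ofReal_inv_of_pos (by positivity),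
        ← ENNReal.ofReal_natCast]
      push_cast
      rfl
    · simp
  simp_rw [hterm]
  rw [← ENNReal.ofReal_sum_of_nonneg fun z _ => by have := hf z; positivity, sum_adj hN, avg,
    Finset.sum_div]
  simp_rw [add_div]

/-- The event that a path avoids `B` up to time `n` and is at `y` at time `n`. -/
def survives {α : Type*} (B : Set α) (n : ℕ) (y : α) : Set (ℕ → α) :=
  {ω | (∀ k, k ≤ n → ω k ∉ B) ∧ ω n = y}

lemma measurableSet_survives {α : Type*} [Finite α] [MeasurableSpace α]
    [MeasurableSingletonClass α] (B : Set α) (n : ℕ) (y : α) : MeasurableSet (survives B n y) := by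
  have hcoord : ∀ (k : ℕ) (S : Set α), MeasurableSet {ω : ℕ → α | ω k ∈ S} := fun k S =>
    measurable_pi_apply k S.toFinite.measurableSet
  have hset : survives B n y = (⋂ k ∈ Set.Iic n, {ω | ω k ∈ Bᶜ}) ∩ {ω | ω n ∈ ({y} : Set α)} := by
    ext ω
    simp [survives]
  rw [hset]
  exact (MeasurableSet.biInter (Set.to_countable _) fun k _ => hcoord k Bᶜ).inter (hcoord n {y})

lemma dependsOn_survives {α : Type*} (B : Set α) (n : ℕ) (y : α) :
    DependsOn (· ∈ survives B n y) (Set.Iic n) := fun ω ω' h => by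
  refine propext (and_congr (forall₂_congr fun k hk => ?_) ?_)
  · rw [h k (Set.mem_Iic.mpr hk)]
  · rw [h n Set.self_mem_Iic]

lemma survives_of_mem {α : Type*} {B : Set α} (n : ℕ) {y : α} (hy : y ∈ B) :
    survives B n y = ∅ :=
  Set.eq_empty_of_forall_notMem fun _ hω => hω.1 n le_rfl (hω.2 ▸ hy)

lemma survives_succ {α : Type*} {B : Set α} (n : ℕ) {y : α} (hy : y ∉ B) :
    survives B (n + 1) y = ⋃ z, survives B n z ∩ {ω | ω (n + 1) = y} := by
  ext ω
  simp only [survives, Set.mem_iUnion, Set.mem_inter_iff, Set.mem_ofPred_eq, Nat.le_succ_iff,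
    or_imp, forall_and, forall_eq]
  constructor
  · rintro ⟨⟨h, -⟩, hlast⟩
    exact ⟨ω n, ⟨h, rfl⟩, hlast⟩
  · rintro ⟨z, ⟨h, -⟩, rfl⟩
    exact ⟨⟨h, hy⟩, rfl⟩

lemma IsWalkLaw.measure_survives_zero {d N : ℕ} {μ : Measure (ℕ → Torus d N)}
    {init : Torus d N → ℝ≥0∞} (hμ : IsWalkLaw μ init) {B : Set (Torus d N)} {y : Torus d N}
    (hy : y ∉ B) : μ (survives B 0 y) = init y := by
  have hset : survives B 0 y = {ω | ∀ k, k ≤ 0 → ω k = y} := by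
    ext ω
    simp only [survives, Nat.le_zero, forall_eq, Set.mem_ofPred_eq, and_iff_right_iff_imp]
    rintro rfl
    exact hy
  rw [hset, hμ.2 0 fun _ => y, Finset.range_zero, Finset.prod_empty, mul_one]

lemma IsWalkLaw.measure_survives_succ {d N : ℕ} [NeZero N] {μ : Measure (ℕ → Torus d N)}
    {init : Torus d N → ℝ≥0∞} (hμ : IsWalkLaw μ init) {B : Set (Torus d N)} (n : ℕ)
    {y : Torus d N} (hy : y ∉ B) :
    μ (survives B (n + 1) y) = ∑ z, μ (survives B n z) * srwStep z y := by
  have hdisj : Pairwise (Function.onFun Disjoint fun z =>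
      survives B n z ∩ {ω | ω (n + 1) = y}) := fun z z' hz =>
    Set.disjoint_left.mpr fun ω h h' => hz (h.1.2.symm.trans h'.1.2)
  have hstep : MeasurableSet {ω : ℕ → Torus d N | ω (n + 1) = y} :=
    measurableSet_eq_fun (measurable_pi_apply (n + 1)) measurable_const
  rw [survives_succ n hy, measure_iUnion hdisj fun z => (measurableSet_survives B n z).inter hstep,
    tsum_fintype]
  exact Finset.sum_congr rfl fun z _ =>
    hμ.measure_inter_step (dependsOn_survives B n z) (fun _ hω => hω.2) y

lemma IsWalkLaw.measure_survives {d N : ℕ} [NeZero N] (hN : 3 ≤ N) {B : Set (Torus d N)}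
    {x : Torus d N} (hx : x ∉ B) {μ : Measure (ℕ → Torus d N)}
    (hμ : IsWalkLaw μ (pointInit x)) (n : ℕ) (y : Torus d N) :
    μ (survives B n y) = ENNReal.ofReal (killProb B n x y) := by
  by_cases hy : y ∈ B
  · rw [survives_of_mem n hy, killProb_of_mem hx n hy, measure_empty, ENNReal.ofReal_zero]
  induction n generalizing y with
  | zero =>
    rw [hμ.measure_survives_zero hy, killProb_zero, pointInit]
    split_ifs <;> simp
  | succ n ih =>
    have hsurvive : ∀ z, μ (survives B n z) = ENNReal.ofReal (killProb B n x z) := fun z => by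
      by_cases hz : z ∈ B
      · rw [survives_of_mem n hz, killProb_of_mem hx n hz, measure_empty, ENNReal.ofReal_zero]
      · exact ih z hz
    simp_rw [hμ.measure_survives_succ n hy, hsurvive]
    rw [sum_ofReal_mul_srwStep hN fun z => killProb_nonneg B n x z, killProb_succ,
      killAvg_eq_avg (fun z hz => killProb_of_mem hx n hz) hy]

/-! ### Semigroups generated by bounded operators -/

section Semigroup

variable {E : Type*} [NormedAddCommGroup E] [NormedSpace ℝ E] [CompleteSpace E]

lemma hasSum_exp_smul_apply (T : E →L[ℝ] E) (t : ℝ) (w : E) :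
    HasSum (fun n : ℕ => (t ^ n / n.factorial) • (T ^ n) w) (NormedSpace.exp (t • T) w) := by
  have h := (NormedSpace.exp_series_hasSum_exp' (𝕂 := ℝ) (t • T)).mapL
    (ContinuousLinearMap.apply ℝ E w)
  refine h.congr_fun fun n => ?_
  rw [ContinuousLinearMap.apply_apply, smul_apply, smul_pow, smul_apply, smul_smul,
    div_eq_inv_mul]

lemma exp_smul_apply_mem {T : E →L[ℝ] E} {V : Submodule ℝ E} (hV : IsClosed (V : Set E))
    (hT : ∀ v ∈ V, T v ∈ V) (t : ℝ) {w : E} (hw : w ∈ V) : NormedSpace.exp (t • T) w ∈ V := by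
  have hpow : ∀ n : ℕ, (T ^ n) w ∈ V := fun n => by
    induction n with
    | zero => simpa using hw
    | succ n ih => rw [pow_succ', mul_apply_eq_comp]; exact hT _ ih
  exact hV.mem_of_tendsto (hasSum_exp_smul_apply T t w)
    (Eventually.of_forall fun s => V.sum_mem fun n _ => V.smul_mem _ (hpow n))

lemma exp_smul_apply_of_eigenvector {T : E →L[ℝ] E} {w : E} {l : ℝ} (h : T w = l • w) (t : ℝ) :
    NormedSpace.exp (t • T) w = Real.exp (t * l) • w := by
  have hpow : ∀ n : ℕ, (T ^ n) w = l ^ n • w := fun n => by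
    induction n with
    | zero => simp
    | succ n ih => rw [pow_succ', mul_apply_eq_comp, ih, map_smul, h, smul_smul, pow_succ]
  have hscalar := (NormedSpace.exp_series_hasSum_exp' (𝕂 := ℝ) (t * l)).smul_const w
  rw [← Real.exp_eq_exp_ℝ] at hscalar
  refine (hasSum_exp_smul_apply T t w).unique (hscalar.congr_fun fun n => ?_)
  rw [hpow, smul_smul, mul_pow, smul_eq_mul, div_eq_inv_mul, mul_assoc]

lemma hasDerivAt_exp_smul_apply (T : E →L[ℝ] E) (w : E) (t : ℝ) :
    HasDerivAt (fun t : ℝ => NormedSpace.exp (t • T) w) (T (NormedSpace.exp (t • T) w)) t :=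
  (ContinuousLinearMap.apply ℝ E w).hasFDerivAt.comp_hasDerivAt t
    (hasDerivAt_exp_smul_const' T t)

end Semigroup

section InnerSemigroup

variable {E : Type*} [NormedAddCommGroup E] [InnerProductSpace ℝ E]

lemma norm_le_exp_mul_of_inner_deriv_le {u u' : ℝ → E} (hu : ∀ t, HasDerivAt u (u' t) t) {c : ℝ}
    (h : ∀ t, inner ℝ (u t) (u' t) ≤ c * ‖u t‖ ^ 2) {t : ℝ} (ht : 0 ≤ t) :
    ‖u t‖ ≤ Real.exp (c * t) * ‖u 0‖ := by
  have hderiv : ∀ t, HasDerivAt (fun t : ℝ => ‖u t‖ ^ 2 * Real.exp (-(2 * c) * t))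
      (2 * inner ℝ (u t) (u' t) * Real.exp (-(2 * c) * t) +
        ‖u t‖ ^ 2 * (Real.exp (-(2 * c) * t) * (-(2 * c)))) t := fun t =>
    (hu t).norm_sq.mul (by simpa using ((hasDerivAt_id t).const_mul (-(2 * c))).exp)
  have hanti : ‖u t‖ ^ 2 * Real.exp (-(2 * c) * t) ≤ ‖u 0‖ ^ 2 := by
    have hle := antitone_of_deriv_nonpos (fun t => (hderiv t).differentiableAt) (fun t => by
      rw [(hderiv t).deriv]
      nlinarith [h t, Real.exp_pos (-(2 * c) * t)]) ht
    simpa using hle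
  rw [neg_mul, Real.exp_neg, ← div_eq_mul_inv, div_le_iff₀ (Real.exp_pos _)] at hanti
  refine (pow_le_pow_iff_left₀ (norm_nonneg _) (by positivity) two_ne_zero).mp ?_
  rwa [mul_pow, ← Real.exp_nat_mul, Nat.cast_ofNat, ← mul_assoc, mul_comm]

variable [CompleteSpace E]

lemma norm_exp_smul_apply_le {T : E →L[ℝ] E} {V : Submodule ℝ E} (hV : IsClosed (V : Set E))
    (hT : ∀ v ∈ V, T v ∈ V) {c : ℝ} (hc : ∀ v ∈ V, inner ℝ v (T v) ≤ c * ‖v‖ ^ 2) {w : E}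
    (hw : w ∈ V) {t : ℝ} (ht : 0 ≤ t) :
    ‖NormedSpace.exp (t • T) w‖ ≤ Real.exp (c * t) * ‖w‖ := by
  simpa using norm_le_exp_mul_of_inner_deriv_le (hasDerivAt_exp_smul_apply T w)
    (fun s => hc _ (exp_smul_apply_mem hV hT s hw)) ht

lemma exists_norm_exp_smul_apply_sub_smul_le {T : E →L[ℝ] E}
    (hsymm : (T : E →ₗ[ℝ] E).IsSymmetric) {V : Submodule ℝ E} (hV : IsClosed (V : Set E))
    (hT : ∀ v ∈ V, T v ∈ V) {s : E} (hs : s ∈ V) {l : ℝ} (hTs : T s = l • s) {c : ℝ}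
    (hc : ∀ v ∈ V, inner ℝ s v = 0 → inner ℝ v (T v) ≤ c * ‖v‖ ^ 2) {w : E} (hw : w ∈ V) {t : ℝ}
    (ht : 0 ≤ t) :
    ∃ a : ℝ, ‖NormedSpace.exp (t • T) w - a • s‖ ≤ Real.exp (c * t) * ‖w‖ := by
  let W : Submodule ℝ E := V ⊓ (ℝ ∙ s)ᗮ
  have hW : IsClosed (W : Set E) := hV.inter (Submodule.isClosed_orthogonal _)
  have hTW : ∀ v ∈ W, T v ∈ W := fun v hv => by
    refine ⟨hT v hv.1, Submodule.mem_orthogonal_singleton_iff_inner_right.mpr ?_⟩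
    have hmove : inner ℝ (T s) v = inner ℝ s (T v) := hsymm s v
    rw [← hmove, hTs, inner_smul_left,
      Submodule.mem_orthogonal_singleton_iff_inner_right.mp hv.2, mul_zero]
  obtain ⟨b, hb⟩ := Submodule.mem_span_singleton.mp ((ℝ ∙ s).starProjection_apply_mem w)
  have hv : w - b • s ∈ W := by
    refine ⟨V.sub_mem hw (V.smul_mem b hs), ?_⟩
    rw [hb]
    exact Submodule.sub_starProjection_mem_orthogonal w
  have hnorm : ‖w - b • s‖ ≤ ‖w‖ := by
    rw [hb, ← Submodule.starProjection_orthogonal_val]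
    exact Submodule.norm_starProjection_apply_le _ w
  refine ⟨b * Real.exp (t * l), ?_⟩
  have hsplit : NormedSpace.exp (t • T) w - (b * Real.exp (t * l)) • s =
      NormedSpace.exp (t • T) (w - b • s) := by
    rw [map_sub, map_smul, exp_smul_apply_of_eigenvector hTs, smul_smul]
  rw [hsplit]
  exact (norm_exp_smul_apply_le hW hTW (fun v hv => hc v hv.1
    (Submodule.mem_orthogonal_singleton_iff_inner_right.mp hv.2)) hv ht).trans (by gcongr)

end InnerSemigroup

/-! ### The heat kernel of the killed walk -/

/-- The subspace of functions vanishing on `B`. -/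
def vanishing {d N : ℕ} (B : Set (Torus d N)) : Submodule ℝ (EuclideanSpace ℝ (Torus d N)) where
  carrier := {f | ∀ x ∈ B, f x = 0}
  zero_mem' := fun _ _ => rfl
  add_mem' := fun hf hg x hx => by rw [PiLp.add_apply, hf x hx, hg x hx, add_zero]
  smul_mem' := fun c f hf x hx => by rw [PiLp.smul_apply, hf x hx, smul_zero]

section HeatKernel

variable {d N : ℕ} {B : Set (Torus d N)}

lemma single_mem_vanishing {x : Torus d N} (hx : x ∉ B) :
    EuclideanSpace.single x (1 : ℝ) ∈ vanishing B := fun y hy => by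
  rw [PiLp.single_apply, if_neg (ne_of_mem_of_not_mem hy hx)]

variable [NeZero N]

lemma killOp_mem_vanishing (B : Set (Torus d N)) (f : EuclideanSpace ℝ (Torus d N)) :
    killOp B f ∈ vanishing B :=
  fun _ hx => killAvg_of_mem _ hx

/-- The weight that the continuous-time walk started at `x` and killed on `B` gives to `y` at
time `t`. -/
def killHeat (B : Set (Torus d N)) (t : ℝ) (x y : Torus d N) : ℝ :=
  Real.exp (-t) * NormedSpace.exp (t • killOp B) (EuclideanSpace.single x 1) y

lemma hasSum_killHeat (B : Set (Torus d N)) (t : ℝ) (x y : Torus d N) :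
    HasSum (fun n => poissonWeight t n * killProb B n x y) (killHeat B t x y) := by
  have h := ((hasSum_exp_smul_apply (killOp B) t (EuclideanSpace.single x 1)).mapL
    (EuclideanSpace.proj y)).mul_left (Real.exp (-t))
  refine h.congr_fun fun n => ?_
  rw [PiLp.proj_apply, PiLp.smul_apply, poissonWeight, smul_eq_mul, mul_assoc, killProb]

lemma killHeat_nonneg (B : Set (Torus d N)) {t : ℝ} (ht : 0 ≤ t) (x y : Torus d N) :
    0 ≤ killHeat B t x y :=
  (hasSum_killHeat B t x y).nonneg fun n =>
    mul_nonneg (poissonWeight_nonneg ht n) (killProb_nonneg B n x y)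

lemma inner_killOp_self_le {c : ℝ} {f : EuclideanSpace ℝ (Torus d N)} (hf : f ∈ vanishing B)
    (h : ∑ x, f x * avg f.ofLp x ≤ c * ∑ x, f x ^ 2) :
    inner ℝ f (killOp B f) ≤ c * ‖f‖ ^ 2 := by
  rwa [inner_killOp_self hf, EuclideanSpace.real_norm_sq_eq]

lemma killHeat_le {c : ℝ}
    (hc : ∀ f : Torus d N → ℝ, (∀ x ∈ B, f x = 0) → ∑ x, f x * avg f x ≤ c * ∑ x, f x ^ 2)
    {t : ℝ} (ht : 0 ≤ t) {x : Torus d N} (hx : x ∉ B) (y : Torus d N) :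
    killHeat B t x y ≤ Real.exp (-((1 - c) * t)) := by
  have hnorm := norm_exp_smul_apply_le (vanishing B).closed_of_finiteDimensional
    (fun f _ => killOp_mem_vanishing B f) (fun f hf => inner_killOp_self_le hf (hc f.ofLp hf))
    (single_mem_vanishing hx) ht
  rw [PiLp.norm_single, norm_one, mul_one] at hnorm
  calc killHeat B t x y ≤ Real.exp (-t) * Real.exp (c * t) := by
        unfold killHeat
        gcongr
        exact (le_abs_self _).trans ((PiLp.norm_apply_le _ y).trans hnorm)
    _ = Real.exp (-((1 - c) * t)) := by rw [← Real.exp_add]; ring_nf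

lemma exists_abs_killHeat_sub_le {s : Torus d N → ℝ} (hs : ∀ x ∈ B, s x = 0) {l : ℝ}
    (heigen : killAvg B s = l • s) {c : ℝ}
    (hc : ∀ f : Torus d N → ℝ, (∀ x ∈ B, f x = 0) → ∑ x, s x * f x = 0 →
      ∑ x, f x * avg f x ≤ c * ∑ x, f x ^ 2)
    {t : ℝ} (ht : 0 ≤ t) {x : Torus d N} (hx : x ∉ B) :
    ∃ a : ℝ, ∀ y, |killHeat B t x y - a * s y| ≤ Real.exp (-((1 - c) * t)) := by
  obtain ⟨a, ha⟩ := exists_norm_exp_smul_apply_sub_smul_le (isSymmetric_killOp B)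
    (vanishing B).closed_of_finiteDimensional (fun f _ => killOp_mem_vanishing B f)
    (s := WithLp.toLp 2 s) hs (congrArg (WithLp.toLp 2) heigen)
    (fun f hf hsf => inner_killOp_self_le hf (hc f.ofLp hf (by rwa [inner_eq_sum] at hsf)))
    (single_mem_vanishing hx) ht
  rw [PiLp.norm_single, norm_one, mul_one] at ha
  refine ⟨Real.exp (-t) * a, fun y => ?_⟩
  have hcoord := (PiLp.norm_apply_le _ y).trans ha
  rw [PiLp.sub_apply, PiLp.smul_apply, Real.norm_eq_abs, smul_eq_mul] at hcoord
  calc |killHeat B t x y - Real.exp (-t) * a * s y|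
      = Real.exp (-t) *
          |NormedSpace.exp (t • killOp B) (EuclideanSpace.single x 1) y - a * s y| := by
        rw [killHeat, mul_assoc, ← mul_sub, abs_mul, abs_of_pos (Real.exp_pos _)]
    _ ≤ Real.exp (-t) * Real.exp (c * t) := by gcongr
    _ = Real.exp (-((1 - c) * t)) := by rw [← Real.exp_add]; ring_nf

end HeatKernel

/-! ### The killed continuous-time walk -/

lemma modeRate_nonneg (d : ℕ) (a : ℝ) : 0 ≤ modeRate d a :=
  div_nonneg (sub_nonneg.mpr (Real.cos_le_one a)) d.cast_nonneg

lemma modeRate_two_pi_div_pos {d N : ℕ} (hd : d ≠ 0) (hN : 2 ≤ N) :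
    0 < modeRate d (2 * Real.pi / N) := by
  have hN' : (2 : ℝ) ≤ N := by exact_mod_cast hN
  have hangle : 0 < 2 * Real.pi / N := by positivity
  have hangle' : 2 * Real.pi / N ≤ Real.pi := by
    rw [div_le_iff₀ (by positivity)]
    nlinarith [Real.pi_pos]
  have hcos := Real.cos_lt_cos_of_nonneg_of_le_pi le_rfl hangle' hangle
  rw [Real.cos_zero] at hcos
  exact div_pos (sub_pos.mpr hcos) (by positivity)

lemma sum_sq_le_of_eq_zero {ι : Type*} [Fintype ι] {f : ι → ℝ} {b : ι} (hb : f b = 0) :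
    (∑ x, f x) ^ 2 ≤ (Fintype.card ι - 1) * ∑ x, f x ^ 2 := by
  have hsum : ∑ x ∈ Finset.univ.erase b, f x = ∑ x, f x := Finset.sum_erase _ hb
  have hsq : ∑ x ∈ Finset.univ.erase b, f x ^ 2 = ∑ x, f x ^ 2 :=
    Finset.sum_erase _ (by rw [hb, zero_pow two_ne_zero])
  have hcard : ((Finset.univ.erase b).card : ℝ) = Fintype.card ι - 1 := by
    rw [Finset.cast_card_erase_of_mem (Finset.mem_univ b), Finset.card_univ]
  rw [← hsum, ← hsq, ← hcard]
  exact sq_sum_le_card_mul_sum_sq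

section KilledWalk

variable {d N : ℕ} {B : Set (Torus d N)}

lemma lt_hitT_iff {ω : CTPath d N} (hpos : ∀ k, 0 < ω.2 k) (hhit : ∃ k, ω.1 k ∈ B) {t : ℝ}
    {n : ℕ} (hjump : ω.2 ∈ jumpEvent n t) : t < hitT B ω ↔ ∀ k, k ≤ n → ω.1 k ∉ B := by
  have hmono := strictMono_sum_range_of_pos hpos
  have hmem : ∀ k, ω.1 k ∈ B →
      ∑ j ∈ Finset.range k, ω.2 j ∈ {s | 0 ≤ s ∧ ctPos ω s ∈ B} := by
    intro k hk
    refine ⟨Finset.sum_nonneg fun j _ => (hpos j).le, ?_⟩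
    rw [ctPos, nJumps_eq_of_mem_jumpEvent hpos ⟨le_rfl, hmono k.lt_succ_self⟩]
    exact hk
  constructor
  · intro ht k hk hkB
    have hle : hitT B ω ≤ ∑ j ∈ Finset.range k, ω.2 j :=
      csInf_le ⟨0, fun s hs => hs.1⟩ (hmem k hkB)
    linarith [hmono.monotone hk, hjump.1]
  · intro havoid
    obtain ⟨k, hk⟩ := hhit
    refine hjump.2.trans_le (le_csInf ⟨_, hmem k hk⟩ fun s hs => ?_)
    by_contra! hlt
    exact havoid _ (nJumps_le hpos hlt) hs.2

variable [NeZero N]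

lemma sum_mul_avg_le_of_eq_zero (hd : d ≠ 0) (hB : B.Nonempty) {f : Torus d N → ℝ}
    (hf : ∀ x ∈ B, f x = 0) :
    ∑ x, f x * avg f x ≤ (1 - modeRate d (2 * Real.pi / N) / N ^ d) * ∑ x, f x ^ 2 := by
  obtain ⟨b, hb⟩ := hB
  have hN : (0 : ℝ) < N := by exact_mod_cast NeZero.pos N
  have hmean := sum_sq_le_of_eq_zero (hf b hb)
  have hcard : (Fintype.card (Torus d N) : ℝ) = N ^ d := by simp
  rw [hcard] at hmean
  have hvar : (∑ x, f x ^ 2) / N ^ d ≤ ∑ x, f x ^ 2 - (∑ x, f x) ^ 2 / N ^ d := by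
    rw [le_sub_iff_add_le, ← add_div, div_le_iff₀ (by positivity)]
    linarith
  have hgap := mul_le_mul_of_nonneg_left hvar (modeRate_nonneg d (2 * Real.pi / N))
  calc ∑ x, f x * avg f x ≤ ∑ x, f x ^ 2 -
        modeRate d (2 * Real.pi / N) * (∑ x, f x ^ 2 - (∑ x, f x) ^ 2 / N ^ d) :=
        sum_mul_avg_le hd f
    _ ≤ ∑ x, f x ^ 2 - modeRate d (2 * Real.pi / N) * ((∑ x, f x ^ 2) / N ^ d) := by linarith
    _ = (1 - modeRate d (2 * Real.pi / N) / N ^ d) * ∑ x, f x ^ 2 := by ring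

lemma tendsto_killHeat_atTop (hd : d ≠ 0) (hN : 2 ≤ N) (hB : B.Nonempty) {x : Torus d N}
    (hx : x ∉ B) (y : Torus d N) : Tendsto (fun t => killHeat B t x y) atTop (nhds 0) := by
  have hrate : 0 < 1 - (1 - modeRate d (2 * Real.pi / N) / N ^ d) := by
    have := modeRate_two_pi_div_pos hd hN
    rw [sub_sub_cancel]
    positivity
  refine squeeze_zero' ?_ ?_ (Real.tendsto_exp_neg_atTop_nhds_zero.comp
    (tendsto_id.const_mul_atTop hrate))
  · filter_upwards [eventually_ge_atTop 0] with t ht using killHeat_nonneg B ht x y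
  · filter_upwards [eventually_ge_atTop 0] with t ht using
      killHeat_le (fun f hf => sum_mul_avg_le_of_eq_zero hd hB hf) ht hx y

lemma IsWalkLaw.measureReal_forall_notMem_le (hN : 3 ≤ N) {x : Torus d N} (hx : x ∉ B)
    {μ : Measure (ℕ → Torus d N)} (hμ : IsWalkLaw μ (pointInit x)) (n : ℕ) :
    μ.real {ω | ∀ k, ω k ∉ B} ≤ ∑ y, killProb B n x y := by
  refine ENNReal.toReal_le_of_le_ofReal
    (Finset.sum_nonneg fun y _ => killProb_nonneg B n x y) ?_
  rw [ENNReal.ofReal_sum_of_nonneg fun y _ => killProb_nonneg B n x y]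
  simp_rw [← hμ.measure_survives hN hx n]
  refine (measure_mono fun ω hω => ?_).trans (measure_iUnion_fintype_le μ _)
  exact Set.mem_iUnion.mpr ⟨ω n, fun k _ => hω k, rfl⟩

lemma IsWalkLaw.ae_exists_mem (hd : d ≠ 0) (hN : 3 ≤ N) (hB : B.Nonempty) {x : Torus d N}
    (hx : x ∉ B) {μ : Measure (ℕ → Torus d N)} (hμ : IsWalkLaw μ (pointInit x)) :
    ∀ᵐ ω ∂μ, ∃ k, ω k ∈ B := by
  have := hμ.1
  have hbound : ∀ t : ℝ, 0 ≤ t → μ.real {ω | ∀ k, ω k ∉ B} ≤ ∑ y, killHeat B t x y := by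
    intro t ht
    have hheat : HasSum (fun n => ∑ y, poissonWeight t n * killProb B n x y)
        (∑ y, killHeat B t x y) := hasSum_sum fun y _ => hasSum_killHeat B t x y
    have hconst := (hasSum_poissonWeight t).mul_right (μ.real {ω | ∀ k, ω k ∉ B})
    rw [one_mul] at hconst
    refine hasSum_le (fun n => ?_) hconst hheat
    rw [← Finset.mul_sum]
    exact mul_le_mul_of_nonneg_left (hμ.measureReal_forall_notMem_le hN hx n)
      (poissonWeight_nonneg ht n)
  have hlim : Tendsto (fun t => ∑ y, killHeat B t x y) atTop (nhds 0) := by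
    simpa using tendsto_finsetSum (Finset.univ : Finset (Torus d N))
      fun y _ => tendsto_killHeat_atTop hd (by omega) hB hx y
  have hzero : μ.real {ω | ∀ k, ω k ∉ B} = 0 :=
    le_antisymm (ge_of_tendsto hlim ((eventually_ge_atTop 0).mono hbound)) measureReal_nonneg
  rw [ae_iff]
  simpa using (measureReal_eq_zero_iff).mp hzero

variable {x : Torus d N} {μ : Measure (ℕ → Torus d N)} {ν : Measure (ℕ → ℝ)} {t : ℝ}

lemma ctPos_event_ae_eq (hd : d ≠ 0) (hN : 3 ≤ N) (hB : B.Nonempty) (hx : x ∉ B)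
    (hμ : IsWalkLaw μ (pointInit x)) (hν : IsIIDExp ν) (ht : 0 ≤ t) (y : Torus d N) :
    {ω | ctPos ω t = y ∧ t < hitT B ω} =ᵐ[μ.prod ν]
      ⋃ n, survives B n y ×ˢ jumpEvent n t := by
  have := hμ.1
  have := hν.1
  rw [eventuallyEq_set]
  filter_upwards [Measure.quasiMeasurePreserving_fst.ae (hμ.ae_exists_mem hd hN hB hx),
    Measure.quasiMeasurePreserving_snd.ae hν.ae_pos,
    Measure.quasiMeasurePreserving_snd.ae (hν.ae_exists_mem_jumpEvent ht)]
    with ω hhit hpos ⟨m, hm⟩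
  simp only [Set.mem_iUnion, Set.mem_prod]
  rw [lt_hitT_iff hpos hhit hm, ctPos, nJumps_eq_of_mem_jumpEvent hpos hm]
  constructor
  · rintro ⟨hy, havoid⟩
    exact ⟨m, ⟨havoid, hy⟩, hm⟩
  · rintro ⟨n, ⟨havoid, hy⟩, hn⟩
    obtain rfl : n = m := (nJumps_eq_of_mem_jumpEvent hpos hn).symm.trans
      (nJumps_eq_of_mem_jumpEvent hpos hm)
    exact ⟨hy, havoid⟩

lemma measurableSet_survives_prod_jumpEvent (B : Set (Torus d N)) (n : ℕ) (y : Torus d N)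
    (t : ℝ) : MeasurableSet (survives B n y ×ˢ jumpEvent n t) :=
  (measurableSet_survives B n y).prod (measurableSet_jumpEvent n t)

lemma nullMeasurableSet_ctPos_event (hd : d ≠ 0) (hN : 3 ≤ N) (hB : B.Nonempty) (hx : x ∉ B)
    (hμ : IsWalkLaw μ (pointInit x)) (hν : IsIIDExp ν) (ht : 0 ≤ t) (y : Torus d N) :
    NullMeasurableSet {ω | ctPos ω t = y ∧ t < hitT B ω} (μ.prod ν) :=
  (MeasurableSet.iUnion fun n =>
    measurableSet_survives_prod_jumpEvent B n y t).nullMeasurableSet.congr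
      (ctPos_event_ae_eq hd hN hB hx hμ hν ht y).symm

lemma measureReal_ctPos_event (hd : d ≠ 0) (hN : 3 ≤ N) (hB : B.Nonempty) (hx : x ∉ B)
    (hμ : IsWalkLaw μ (pointInit x)) (hν : IsIIDExp ν) (ht : 0 ≤ t) (y : Torus d N) :
    (μ.prod ν).real {ω | ctPos ω t = y ∧ t < hitT B ω} = killHeat B t x y := by
  have := hμ.1
  have := hν.1
  have hdisj : Pairwise (Function.onFun (AEDisjoint (μ.prod ν)) fun n =>
      survives B n y ×ˢ jumpEvent n t) := fun n m hnm =>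
    measure_mono_null (fun ω hω hpos => hnm ((nJumps_eq_of_mem_jumpEvent hpos hω.1.2).symm.trans
      (nJumps_eq_of_mem_jumpEvent hpos hω.2.2)))
      (ae_iff.mp (Measure.quasiMeasurePreserving_snd.ae hν.ae_pos))
  have hnonneg : ∀ n, 0 ≤ poissonWeight t n * killProb B n x y := fun n =>
    mul_nonneg (poissonWeight_nonneg ht n) (killProb_nonneg B n x y)
  have hsum := hasSum_killHeat B t x y
  rw [measureReal_congr (ctPos_event_ae_eq hd hN hB hx hμ hν ht y), measureReal_def,
    measure_iUnion₀ hdisj fun n =>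
      (measurableSet_survives_prod_jumpEvent B n y t).nullMeasurableSet]
  simp_rw [Measure.prod_prod, hμ.measure_survives hN hx, hν.measure_jumpEvent _ ht,
    ← ENNReal.ofReal_mul (killProb_nonneg B _ x y), mul_comm _ (poissonWeight t _)]
  rw [← ENNReal.ofReal_tsum_of_nonneg hnonneg hsum.summable, hsum.tsum_eq,
    ENNReal.toReal_ofReal (hsum.nonneg hnonneg)]

lemma measureReal_lt_hitT (hd : d ≠ 0) (hN : 3 ≤ N) (hB : B.Nonempty) (hx : x ∉ B)
    (hμ : IsWalkLaw μ (pointInit x)) (hν : IsIIDExp ν) (ht : 0 ≤ t) :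
    (μ.prod ν).real {ω | t < hitT B ω} = ∑ y, killHeat B t x y := by
  have := hμ.1
  have := hν.1
  have hunion : {ω : CTPath d N | t < hitT B ω} =
      ⋃ y, {ω | ctPos ω t = y ∧ t < hitT B ω} := by
    ext ω
    simp
  have hdisj : Pairwise (Function.onFun (AEDisjoint (μ.prod ν)) fun y =>
      {ω : CTPath d N | ctPos ω t = y ∧ t < hitT B ω}) := fun y y' hne =>
    (Set.disjoint_left.mpr fun ω hω hω' => hne (hω.1.symm.trans hω'.1)).aedisjoint
  rw [hunion, measureReal_def, measure_iUnion₀ hdisj fun y =>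
    nullMeasurableSet_ctPos_event hd hN hB hx hμ hν ht y, tsum_fintype,
    ENNReal.toReal_sum fun _ _ => measure_ne_top _ _]
  exact Finset.sum_congr rfl fun y _ => measureReal_ctPos_event hd hN hB hx hμ hν ht y

end KilledWalk

/-! ### Quasistationary distributions -/

/-- `σ` is a probability distribution outside `B` which one step of the walk killed on `B`
multiplies by `l`; maximality of `l` is not required. -/
structure IsQuasistationary {d N : ℕ} [NeZero N] (B : Set (Torus d N)) (σ : Torus d N → ℝ)
    (l : ℝ) : Prop where
  nonneg : ∀ x, 0 ≤ σ x
  eq_zero : ∀ x ∈ B, σ x = 0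
  sum_eq_one : ∑ x, σ x = 1
  killAvg_eq : killAvg B σ = l • σ

section Quasistationary

variable {d N : ℕ} [NeZero N] {B : Set (Torus d N)} {σ : Torus d N → ℝ} {l : ℝ}

lemma IsQSD.exists_isQuasistationary (hN : 3 ≤ N) (hσ : IsQSD d N B σ) :
    ∃ l, IsQuasistationary B σ l := by
  obtain ⟨hnonneg, hzero, hsum, l, heigen, -⟩ := hσ
  refine ⟨l, hnonneg, hzero, by rw [← hsum, finsum_eq_sum_of_fintype], funext fun x => ?_⟩
  by_cases hx : x ∈ B
  · rw [killAvg_of_mem σ hx, Pi.smul_apply, hzero x hx, smul_zero]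
  · rw [← killedMul_eq_killAvg hN σ hx, heigen x hx, Pi.smul_apply, smul_eq_mul]

namespace IsQuasistationary

lemma avg_eq (h : IsQuasistationary B σ l) {x : Torus d N} (hx : x ∉ B) : avg σ x = l * σ x := by
  rw [← killAvg_eq_avg h.eq_zero hx, h.killAvg_eq, Pi.smul_apply, smul_eq_mul]

lemma sum_mul_avg (h : IsQuasistationary B σ l) {f : Torus d N → ℝ} (hf : ∀ x ∈ B, f x = 0) :
    ∑ x, f x * avg σ x = l * ∑ x, f x * σ x := by
  rw [Finset.mul_sum]
  refine Finset.sum_congr rfl fun x _ => ?_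
  by_cases hx : x ∈ B
  · rw [hf x hx, zero_mul, zero_mul, mul_zero]
  · rw [h.avg_eq hx, mul_left_comm]

lemma le_eigenvalue (h : IsQuasistationary B σ l) {φ : Torus d N → ℝ} {q : ℝ}
    (hφ : ∀ x, q * φ x ≤ killAvg B φ x) (hpos : 0 < ∑ x, σ x * φ x) : q ≤ l := by
  refine le_of_mul_le_mul_right ?_ hpos
  calc q * ∑ x, σ x * φ x = ∑ x, σ x * (q * φ x) := by
        simp_rw [Finset.mul_sum, mul_left_comm]
    _ ≤ ∑ x, σ x * killAvg B φ x :=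
        Finset.sum_le_sum fun x _ => mul_le_mul_of_nonneg_left (hφ x) (h.nonneg x)
    _ = l * ∑ x, σ x * φ x := by
        simp_rw [← sum_killAvg_mul, h.killAvg_eq, Pi.smul_apply, smul_eq_mul, mul_assoc,
          Finset.mul_sum]

-- `f - (∑ f) σ` has mean zero, so the spectral gap of the full torus applies to it.
lemma sum_mul_avg_le (h : IsQuasistationary B σ l) (hd : d ≠ 0)
    (hl : 1 - modeRate d (2 * Real.pi / N) ≤ l) {f : Torus d N → ℝ} (hf : ∀ x ∈ B, f x = 0)
    (horth : ∑ x, σ x * f x = 0) :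
    ∑ x, f x * avg f x ≤ (1 - modeRate d (2 * Real.pi / N)) * ∑ x, f x ^ 2 := by
  set m := ∑ x, f x with hm
  set S := ∑ x, σ x ^ 2 with hS
  have horth' : ∑ x, f x * σ x = 0 := by simpa only [mul_comm] using horth
  have hmean : ∑ x, (f + (-m) • σ) x = 0 := by
    simp only [Pi.add_apply, Pi.smul_apply, smul_eq_mul, Finset.sum_add_distrib,
      ← Finset.mul_sum, h.sum_eq_one, ← hm]
    ring
  have hsq : ∑ x, (f + (-m) • σ) x ^ 2 = ∑ x, f x ^ 2 + m ^ 2 * S := by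
    have hterm : ∀ x, (f + (-m) • σ) x ^ 2 =
        f x ^ 2 - 2 * m * (f x * σ x) + m ^ 2 * σ x ^ 2 := fun x => by
      rw [Pi.add_apply, Pi.smul_apply, smul_eq_mul]
      ring
    simp_rw [hterm, Finset.sum_add_distrib, Finset.sum_sub_distrib, ← Finset.mul_sum, horth']
    ring
  have havg : ∑ x, (f + (-m) • σ) x * avg (f + (-m) • σ) x =
      ∑ x, f x * avg f x + m ^ 2 * (l * S) := by
    have hterm : ∀ x, (f + (-m) • σ) x * avg (f + (-m) • σ) x =
        f x * avg f x - m * (f x * avg σ x + σ x * avg f x) + m ^ 2 * (σ x * avg σ x) :=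
      fun x => by
        simp only [avg_add, avg_smul, Pi.add_apply, Pi.smul_apply, smul_eq_mul]
        ring
    have hself : ∑ x, σ x * avg σ x = l * S := by
      simp only [h.sum_mul_avg h.eq_zero, hS, pow_two]
    simp_rw [hterm, Finset.sum_add_distrib, Finset.sum_sub_distrib, ← Finset.mul_sum,
      Finset.sum_add_distrib, ← sum_avg_mul σ f, mul_comm (avg σ _), h.sum_mul_avg hf, horth',
      hself]
    ring
  have hgap := Frag.sum_mul_avg_le hd (f + (-m) • σ)
  rw [havg, hsq, hmean, zero_pow two_ne_zero, zero_div, sub_zero] at hgap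
  have hprincipal : m ^ 2 * ((1 - modeRate d (2 * Real.pi / N)) * S) ≤ m ^ 2 * (l * S) := by
    have : 0 ≤ S := Finset.sum_nonneg fun x _ => sq_nonneg (σ x)
    gcongr
  linarith

end IsQuasistationary

/-! ### Relaxation of the conditioned walk -/

lemma pow_mul_le_sum_killProb {φ : Torus d N → ℝ} {q : ℝ} (hq : 0 ≤ q) (hφ_le : ∀ x, φ x ≤ 1)
    (hφ : ∀ x, q * φ x ≤ killAvg B φ x) (n : ℕ) (x : Torus d N) :
    q ^ n * φ x ≤ ∑ y, killProb B n x y := by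
  have hweighted : q ^ n * φ x ≤ ∑ y, killProb B n x y * φ y := by
    induction n with
    | zero => simp [killProb_zero]
    | succ n ih =>
      calc q ^ (n + 1) * φ x = q * (q ^ n * φ x) := by ring
        _ ≤ q * ∑ y, killProb B n x y * φ y := by gcongr
        _ = ∑ y, killProb B n x y * (q * φ y) := by simp_rw [Finset.mul_sum, mul_left_comm]
        _ ≤ ∑ y, killProb B n x y * killAvg B φ y := Finset.sum_le_sum fun y _ =>
            mul_le_mul_of_nonneg_left (hφ y) (killProb_nonneg B n x y)
        _ = ∑ y, killProb B (n + 1) x y * φ y := by rw [killProb_succ, sum_killAvg_mul]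
  exact hweighted.trans (Finset.sum_le_sum fun y _ =>
    mul_le_of_le_one_right (killProb_nonneg B n x y) (hφ_le y))

lemma exp_mul_le_sum_killHeat {φ : Torus d N → ℝ} {q : ℝ} (hq : 0 ≤ q) (hφ_le : ∀ x, φ x ≤ 1)
    (hφ : ∀ x, q * φ x ≤ killAvg B φ x) {t : ℝ} (ht : 0 ≤ t) (x : Torus d N) :
    Real.exp (-((1 - q) * t)) * φ x ≤ ∑ y, killHeat B t x y := by
  refine hasSum_le (fun n => ?_) ((hasSum_poissonWeight_mul_pow t q).mul_right (φ x))
    (hasSum_sum fun y _ => hasSum_killHeat B t x y)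
  rw [← Finset.mul_sum, mul_assoc]
  exact mul_le_mul_of_nonneg_left (pow_mul_le_sum_killProb hq hφ_le hφ n x)
    (poissonWeight_nonneg ht n)

lemma abs_div_sum_sub_le {ι : Type*} [Fintype ι] {p s : ι → ℝ} (hs : ∀ y, 0 ≤ s y)
    (hsum : ∑ y, s y = 1) {a r : ℝ} (h : ∀ y, |p y - a * s y| ≤ r) (hpos : 0 < ∑ y, p y) (y : ι) :
    |p y / ∑ z, p z - s y| ≤ (Fintype.card ι + 1) * r / ∑ z, p z := by
  have hmass : |a - ∑ z, p z| ≤ Fintype.card ι * r := by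
    calc |a - ∑ z, p z| = |∑ z, (p z - a * s z)| := by
          rw [Finset.sum_sub_distrib, ← Finset.mul_sum, hsum, mul_one, abs_sub_comm]
      _ ≤ ∑ z, |p z - a * s z| := Finset.abs_sum_le_sum_abs _ _
      _ ≤ Fintype.card ι * r := by
          simpa using Finset.sum_le_card_nsmul Finset.univ _ r fun z _ => h z
  have hs_le : s y ≤ 1 := hsum ▸ Finset.single_le_sum (fun z _ => hs z) (Finset.mem_univ y)
  rw [div_sub' hpos.ne', abs_div, abs_of_pos hpos]
  gcongr
  calc |p y - (∑ z, p z) * s y| = |(p y - a * s y) + s y * (a - ∑ z, p z)| := by ring_nf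
    _ ≤ |p y - a * s y| + s y * |a - ∑ z, p z| := by
        refine (abs_add_le _ _).trans_eq ?_
        rw [abs_mul, abs_of_nonneg (hs y)]
    _ ≤ r + 1 * (Fintype.card ι * r) := by
        gcongr
        exact h y
    _ = (Fintype.card ι + 1) * r := by ring

lemma IsQuasistationary.abs_killHeat_div_sub_le (h : IsQuasistationary B σ l) (hd : d ≠ 0)
    (hl : 1 - modeRate d (2 * Real.pi / N) ≤ l) {φ : Torus d N → ℝ} {q : ℝ} (hq : 0 ≤ q)
    (hφ_le : ∀ x, φ x ≤ 1) (hφ : ∀ x, q * φ x ≤ killAvg B φ x) {t : ℝ} (ht : 0 ≤ t)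
    {x : Torus d N} (hx : x ∉ B) (hφx : 0 < φ x) (y : Torus d N) :
    |killHeat B t x y / ∑ z, killHeat B t x z - σ y| ≤
      (N ^ d + 1) / φ x * Real.exp (-((modeRate d (2 * Real.pi / N) - (1 - q)) * t)) := by
  obtain ⟨a, ha⟩ := exists_abs_killHeat_sub_le h.eq_zero h.killAvg_eq
    (fun f hf horth => h.sum_mul_avg_le hd hl hf horth) ht hx
  have hsurvive := exp_mul_le_sum_killHeat hq hφ_le hφ ht x
  have hpos : 0 < Real.exp (-((1 - q) * t)) * φ x := by positivity
  have hcard : (Fintype.card (Torus d N) : ℝ) = N ^ d := by simp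
  refine (abs_div_sum_sub_le h.nonneg h.sum_eq_one ha (hpos.trans_le hsurvive) y).trans ?_
  rw [sub_sub_cancel, hcard]
  calc (N ^ d + 1) * Real.exp (-(modeRate d (2 * Real.pi / N) * t)) / ∑ z, killHeat B t x z
      ≤ (N ^ d + 1) * Real.exp (-(modeRate d (2 * Real.pi / N) * t)) /
          (Real.exp (-((1 - q) * t)) * φ x) := by gcongr
    _ = (N ^ d + 1) / φ x * (Real.exp (-(modeRate d (2 * Real.pi / N) * t)) /
          Real.exp (-((1 - q) * t))) := by field_simp
    _ = _ := by rw [← Real.exp_sub]; ring_nf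

end Quasistationary

/-! ### The sine barrier -/

lemma torusBall_eq_torusBall_floor {d N : ℕ} (x : Torus d N) {r : ℝ} (hr : 0 ≤ r) :
    torusBall x r = torusBall x (⌊r⌋₊ : ℝ) := by
  ext y
  simp only [torusBall, Set.mem_ofPred_eq, Nat.cast_le, Nat.le_floor_iff hr]

lemma mem_torusBall_self {d N : ℕ} (x : Torus d N) {r : ℝ} (hr : 0 ≤ r) : x ∈ torusBall x r := by
  have hdist : torusDist x x = 0 := Nat.le_zero.mp (Finset.sup_le fun i _ => by simp)
  rwa [torusBall, Set.mem_ofPred_eq, hdist, Nat.cast_zero]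

lemma mem_torusBall_zero_natCast {d N : ℕ} [NeZero N] {R : ℕ} {x : Torus d N} :
    x ∈ torusBall 0 (R : ℝ) ↔ ∀ i, (x i).val ≤ R ∨ N ≤ (x i).val + R := by
  simp only [torusBall, Set.mem_ofPred_eq, Nat.cast_le, torusDist, Finset.sup_le_iff,
    Finset.mem_univ, true_implies, Pi.zero_apply, zero_sub, sub_zero, min_le_iff]
  refine forall_congr' fun i => ?_
  rw [ZMod.neg_val, or_comm]
  split_ifs with h
  · simp [h]
  · omega

lemma sin_pi_mul_div_nonpos {s m : ℝ} (hm : 0 < m)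
    (hs : s ∈ Set.Icc (-m) 0 ∪ Set.Icc m (2 * m)) : Real.sin (Real.pi * s / m) ≤ 0 := by
  have hnonpos : ∀ u ∈ Set.Icc (-m) 0, Real.sin (Real.pi * u / m) ≤ 0 := fun u hu => by
    refine Real.sin_nonpos_of_nonpos_of_neg_pi_le ?_ ?_
    · exact div_nonpos_of_nonpos_of_nonneg
        (mul_nonpos_of_nonneg_of_nonpos Real.pi_pos.le hu.2) hm.le
    · rw [le_div_iff₀ hm]
      nlinarith [Real.pi_pos, hu.1]
  rcases hs with hs | hs
  · exact hnonpos s hs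
  · have hshift : Real.pi * s / m = Real.pi * (s - 2 * m) / m + 2 * Real.pi := by
      field_simp
      ring
    rw [hshift, Real.sin_add_two_pi]
    exact hnonpos _ ⟨by linarith [hs.1], by linarith [hs.2]⟩

lemma two_mul_min_div_le_sin {s m : ℝ} (hs : 0 ≤ s) (hsm : s ≤ m) (hm : 0 < m) :
    2 * min s (m - s) / m ≤ Real.sin (Real.pi * s / m) := by
  have hhalf : ∀ u, 0 ≤ u → u ≤ m / 2 → 2 * u / m ≤ Real.sin (Real.pi * u / m) := fun u hu hum => by
    have hangle : Real.pi * u / m ≤ Real.pi / 2 := by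
      rw [div_le_iff₀ hm]
      nlinarith [Real.pi_pos]
    calc 2 * u / m = 2 / Real.pi * (Real.pi * u / m) := by field_simp
      _ ≤ Real.sin (Real.pi * u / m) := Real.mul_le_sin (by positivity) hangle
  rcases le_total s (m / 2) with h | h
  · rw [min_eq_left (by linarith)]
    exact hhalf s hs h
  · have hreflect : Real.pi * s / m = Real.pi - Real.pi * (m - s) / m := by
      field_simp
      ring
    rw [min_eq_right (by linarith), hreflect, Real.sin_pi_sub]
    exact hhalf _ (by linarith) (by linarith)

/-- The positive part of the sine wave on `ℤ/Nℤ` whose positive arch is `{R + 1, …, N - R - 1}`: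
the principal Dirichlet eigenfunction of that interval, extended by zero. -/
def slabSine (N R : ℕ) (v : ZMod N) : ℝ :=
  max (Real.sin (Real.pi * (v.val - R) / (N - 2 * R))) 0

section SlabSine

variable {N R : ℕ}

lemma slabSine_nonneg (N R : ℕ) (v : ZMod N) : 0 ≤ slabSine N R v := le_max_right _ _

lemma slabSine_le_one (N R : ℕ) (v : ZMod N) : slabSine N R v ≤ 1 :=
  max_le (Real.sin_le_one _) zero_le_one

lemma two_div_le_slabSine {v : ZMod N} (hv : R < v.val) (hvN : v.val + R < N) :
    2 / (N : ℝ) ≤ slabSine N R v := by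
  have hv' : (R : ℝ) + 1 ≤ v.val := by exact_mod_cast hv
  have hvN' : (v.val : ℝ) + R + 1 ≤ N := by exact_mod_cast hvN
  have : (0 : ℝ) ≤ R := R.cast_nonneg
  have hpos : (0 : ℝ) < N - 2 * R := by linarith
  calc 2 / (N : ℝ) ≤ 2 * 1 / (N - 2 * R) := by
        rw [mul_one]
        gcongr
        linarith
    _ ≤ 2 * min ((v.val : ℝ) - R) (N - 2 * R - (v.val - R)) / (N - 2 * R) := by
        gcongr
        exact le_min (by linarith) (by linarith)
    _ ≤ Real.sin (Real.pi * (v.val - R) / (N - 2 * R)) :=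
        two_mul_min_div_le_sin (by linarith) (by linarith) hpos
    _ ≤ slabSine N R v := le_max_left _ _

lemma sin_le_slabSine_intCast (hR : 3 * R < N) {k : ℤ} (hk : -1 ≤ k) (hkN : k ≤ N) :
    Real.sin (Real.pi * (k - R) / (N - 2 * R)) ≤ slabSine N R k := by
  have hR' : 3 * (R : ℝ) + 1 ≤ N := by exact_mod_cast hR
  have : (0 : ℝ) ≤ R := R.cast_nonneg
  by_cases hk' : k = -1 ∨ k = N
  · refine (sin_pi_mul_div_nonpos (by linarith) ?_).trans (slabSine_nonneg N R k)
    rcases hk' with rfl | rfl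
    · exact Or.inl ⟨by push_cast; linarith, by push_cast; linarith⟩
    · exact Or.inr ⟨by push_cast; linarith, by push_cast; linarith⟩
  · lift k to ℕ using by omega
    rw [slabSine, Int.cast_natCast, Int.cast_natCast, ZMod.val_natCast_of_lt (by omega)]
    exact le_max_left _ _

variable [NeZero N]

lemma slabSine_eq_zero (hR : 3 * R < N) {v : ZMod N} (hv : v.val ≤ R ∨ N ≤ v.val + R) :
    slabSine N R v = 0 := by
  have hR' : 3 * (R : ℝ) < N := by exact_mod_cast hR
  have hvN : (v.val : ℝ) < N := by exact_mod_cast v.val_lt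
  refine max_eq_right (sin_pi_mul_div_nonpos (by linarith [R.cast_nonneg (α := ℝ)]) ?_)
  rcases hv with hv | hv
  · have : (v.val : ℝ) ≤ R := by exact_mod_cast hv
    exact Or.inl ⟨by linarith [v.val.cast_nonneg (α := ℝ)], by linarith⟩
  · have : (N : ℝ) ≤ v.val + R := by exact_mod_cast hv
    exact Or.inr ⟨by linarith, by linarith⟩

lemma two_mul_cos_mul_slabSine_le (hR : 3 * R < N) (v : ZMod N) :
    2 * Real.cos (Real.pi / (N - 2 * R)) * slabSine N R v ≤
      slabSine N R (v + 1) + slabSine N R (v - 1) := by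
  rcases le_total (Real.sin (Real.pi * (v.val - R) / (N - 2 * R))) 0 with hneg | hpos
  · rw [slabSine, max_eq_right hneg, mul_zero]
    exact add_nonneg (slabSine_nonneg N R _) (slabSine_nonneg N R _)
  have hvN := v.val_lt
  have hsucc := sin_le_slabSine_intCast hR (k := v.val + 1) (by omega) (by omega)
  have hpred := sin_le_slabSine_intCast hR (k := v.val - 1) (by omega) (by omega)
  push_cast at hsucc hpred
  rw [ZMod.natCast_zmod_val] at hsucc hpred
  refine le_trans (le_of_eq ?_) (add_le_add hsucc hpred)
  rw [slabSine, max_eq_left hpos,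
    show Real.pi * ((v.val : ℝ) + 1 - R) / (N - 2 * R) =
      Real.pi * (v.val - R) / (N - 2 * R) + Real.pi / (N - 2 * R) by ring,
    show Real.pi * ((v.val : ℝ) - 1 - R) / (N - 2 * R) =
      Real.pi * (v.val - R) / (N - 2 * R) - Real.pi / (N - 2 * R) by ring,
    Real.sin_add, Real.sin_sub]
  ring

end SlabSine

section Barrier

variable {d N R : ℕ}

lemma avg_comp_eval (h : ZMod N → ℝ) (i : Fin d) (x : Torus d N) :
    avg (fun z => h (z i)) x = h (x i) + (h (x i + 1) + h (x i - 1) - 2 * h (x i)) / (2 * d) := by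
  have hd : (d : ℝ) ≠ 0 := by exact_mod_cast i.pos.ne'
  have hterm : ∀ j : Fin d, h ((x + Pi.single j 1 : Torus d N) i) +
      h ((x - Pi.single j 1 : Torus d N) i) =
      2 * h (x i) + if j = i then h (x i + 1) + h (x i - 1) - 2 * h (x i) else 0 := fun j => by
    rcases eq_or_ne j i with rfl | hji
    · simp
    · simp [hji, Ne.symm hji, two_mul]
  simp_rw [avg, hterm, Finset.sum_add_distrib, Finset.sum_ite_eq', Finset.mem_univ, if_true,
    Finset.sum_const, Finset.card_univ, Fintype.card_fin, nsmul_eq_mul]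
  field_simp

variable [NeZero N]

lemma mul_slabSine_le_killAvg (hR : 3 * R < N) (i : Fin d) (x : Torus d N) :
    (1 - modeRate d (Real.pi / (N - 2 * R))) * slabSine N R (x i) ≤
      killAvg (torusBall 0 (R : ℝ)) (fun z => slabSine N R (z i)) x := by
  have hzero : ∀ z ∈ torusBall (0 : Torus d N) (R : ℝ), slabSine N R (z i) = 0 := fun z hz =>
    slabSine_eq_zero hR (mem_torusBall_zero_natCast.mp hz i)
  by_cases hx : x ∈ torusBall 0 (R : ℝ)
  · rw [killAvg_of_mem _ hx, hzero x hx, mul_zero]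
  · have hd : (0 : ℝ) < d := by exact_mod_cast i.pos
    rw [killAvg_eq_avg hzero hx, avg_comp_eval, modeRate, sub_mul, one_mul, sub_eq_add_neg]
    gcongr
    rw [le_div_iff₀ (by positivity)]
    have hwave := two_mul_cos_mul_slabSine_le hR (x i)
    field_simp
    linarith

lemma exists_two_div_le_slabSine {x : Torus d N} (hx : x ∉ torusBall 0 (R : ℝ)) :
    ∃ i, 2 / (N : ℝ) ≤ slabSine N R (x i) := by
  simp only [mem_torusBall_zero_natCast, not_forall, not_or, not_le] at hx
  obtain ⟨i, hi, hiN⟩ := hx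
  exact ⟨i, two_div_le_slabSine hi hiN⟩

lemma IsQuasistationary.one_sub_modeRate_le {σ : Torus d N → ℝ} {l : ℝ}
    (h : IsQuasistationary (torusBall 0 (R : ℝ)) σ l) (hR : 3 * R < N) :
    1 - modeRate d (Real.pi / (N - 2 * R)) ≤ l := by
  obtain ⟨z, -, hz⟩ := Finset.exists_ne_zero_of_sum_ne_zero (h.sum_eq_one.trans_ne one_ne_zero)
  obtain ⟨i, hi⟩ := exists_two_div_le_slabSine (mt (h.eq_zero z) hz)
  have hpos : 0 < slabSine N R (z i) := lt_of_lt_of_le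
    (div_pos two_pos (by exact_mod_cast NeZero.pos N)) hi
  refine h.le_eigenvalue (mul_slabSine_le_killAvg hR i) ?_
  exact Finset.sum_pos' (fun x _ => mul_nonneg (h.nonneg x) (slabSine_nonneg N R _))
    ⟨z, Finset.mem_univ z, mul_pos ((h.nonneg z).lt_of_ne' hz) hpos⟩

end Barrier

/-! ### Rates -/

lemma mul_sq_sub_sq_le_cos_sub_cos {a b : ℝ} (ha : 0 ≤ a) (hab : a ≤ b)
    (hb : b ≤ Real.pi / 2) :
    2 / Real.pi ^ 2 * (b ^ 2 - a ^ 2) ≤ Real.cos a - Real.cos b := by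
  have hsum := Real.mul_le_sin (x := (a + b) / 2) (by linarith) (by linarith)
  have hdiff := Real.mul_le_sin (x := (b - a) / 2) (by linarith) (by linarith)
  have hflip : Real.sin ((a - b) / 2) = -Real.sin ((b - a) / 2) := by
    rw [← Real.sin_neg]
    ring_nf
  calc 2 / Real.pi ^ 2 * (b ^ 2 - a ^ 2)
      = 2 * (2 / Real.pi * ((a + b) / 2) * (2 / Real.pi * ((b - a) / 2))) := by ring
    _ ≤ 2 * (Real.sin ((a + b) / 2) * Real.sin ((b - a) / 2)) := by
        have hb : 0 ≤ b := ha.trans hab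
        have : 0 ≤ b - a := sub_nonneg.mpr hab
        gcongr
        exact (by positivity : 0 ≤ 2 / Real.pi * ((a + b) / 2)).trans hsum
    _ = Real.cos a - Real.cos b := by
        rw [Real.cos_sub_cos, hflip]
        ring

lemma modeRate_le_one (d : ℕ) {a : ℝ} (ha : 0 ≤ a) (ha' : a ≤ Real.pi / 2) :
    modeRate d a ≤ 1 := by
  have hcos : 0 ≤ Real.cos a :=
    Real.cos_nonneg_of_mem_Icc ⟨(neg_nonpos.mpr Real.pi_div_two_pos.le).trans ha, ha'⟩
  rcases d.eq_zero_or_pos with rfl | hd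
  · simp [modeRate]
  · have : (1 : ℝ) ≤ d := by exact_mod_cast hd
    rw [modeRate, div_le_one (by positivity)]
    linarith

/-- The difference of the squared frequencies `(2π/N)²` and `(π/(N - 2ηN))²` of the second mode of
the torus and of the principal mode of a slab of width `N - 2ηN`, in units of `(π/N)²`. -/
def frequencyGap (η : ℝ) : ℝ := 4 - 1 / (1 - 2 * η) ^ 2

lemma frequencyGap_pos {η : ℝ} (hη : η < 1 / 4) : 0 < frequencyGap η := by
  have hη' : 0 < 1 - 2 * η := by linarith
  rw [frequencyGap, sub_pos, div_lt_iff₀ (by positivity)]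
  nlinarith

lemma frequencyGap_div_le_modeRate_sub (d : ℕ) {N : ℕ} (hN : 4 ≤ N) {η r : ℝ} (hη : η < 1 / 4)
    (hr : r ≤ η * N) :
    2 * frequencyGap η / (d * N ^ 2) ≤
      modeRate d (2 * Real.pi / N) - modeRate d (Real.pi / (N - 2 * r)) := by
  have hN' : (4 : ℝ) ≤ N := by exact_mod_cast hN
  have hη' : 0 < 1 - 2 * η := by linarith
  have hwidth : (1 - 2 * η) * N ≤ N - 2 * r := by linarith
  have hpos : 0 < N - 2 * r := lt_of_lt_of_le (by positivity) hwidth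
  have hslab : Real.pi / (N - 2 * r) ≤ 2 * Real.pi / N := by
    rw [div_le_div_iff₀ hpos (by positivity)]
    have : (1 / 2 : ℝ) * N ≤ (1 - 2 * η) * N := by
      gcongr
      linarith
    nlinarith [Real.pi_pos]
  have htorus : 2 * Real.pi / N ≤ Real.pi / 2 := by
    rw [div_le_div_iff₀ (by positivity) two_pos]
    nlinarith [Real.pi_pos]
  have hcos := mul_sq_sub_sq_le_cos_sub_cos (by positivity) hslab htorus
  have hgap : 2 * frequencyGap η / N ^ 2 ≤
      2 / Real.pi ^ 2 * ((2 * Real.pi / N) ^ 2 - (Real.pi / (N - 2 * r)) ^ 2) := by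
    calc 2 * frequencyGap η / (N : ℝ) ^ 2
        = 2 * (4 / N ^ 2 - 1 / ((1 - 2 * η) * N) ^ 2) := by
          rw [frequencyGap]
          field_simp
      _ ≤ 2 * (4 / N ^ 2 - 1 / (N - 2 * r) ^ 2) := by gcongr
      _ = _ := by field_simp; ring
  rw [modeRate, modeRate, ← sub_div, sub_sub_sub_cancel_left, mul_comm (d : ℝ), ← div_div]
  exact div_le_div_of_nonneg_right (hgap.trans hcos) d.cast_nonneg

lemma frequencyGap_mul_log_sq_le {d N : ℕ} (hd : d ≠ 0) (hN : 4 ≤ N) {η r : ℝ} (hη : η < 1 / 4)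
    (hr : r ≤ η * N) :
    2 * (frequencyGap η / (d + 1)) * Real.log N ^ 2 ≤
      (modeRate d (2 * Real.pi / N) - modeRate d (Real.pi / (N - 2 * r))) * tstar N := by
  have : (0 : ℝ) < d := by exact_mod_cast Nat.pos_of_ne_zero hd
  have : (0 : ℝ) < N := by positivity
  have hκ := frequencyGap_pos hη
  calc 2 * (frequencyGap η / (d + 1)) * Real.log N ^ 2
      ≤ 2 * (frequencyGap η / d) * Real.log N ^ 2 := by gcongr; linarith
    _ = 2 * frequencyGap η / (d * N ^ 2) * tstar N := by rw [tstar]; field_simp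
    _ ≤ _ := mul_le_mul_of_nonneg_right
        (frequencyGap_div_le_modeRate_sub d hN hη hr) (sq_nonneg _)

lemma eventually_pow_le_exp_mul_log_sq (n : ℕ) {a : ℝ} (ha : 0 < a) :
    ∀ᶠ N : ℕ in atTop, (N : ℝ) ^ n ≤ Real.exp (a * Real.log N ^ 2) := by
  have hlog : Tendsto (fun N : ℕ => Real.log N) atTop atTop :=
    Real.tendsto_log_atTop.comp tendsto_natCast_atTop_atTop
  filter_upwards [hlog.eventually_ge_atTop (n / a), eventually_ge_atTop 1] with N hlarge hN
  have hN' : (1 : ℝ) ≤ N := by exact_mod_cast hN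
  rw [div_le_iff₀ ha] at hlarge
  calc (N : ℝ) ^ n = Real.exp (n * Real.log N) := by
        rw [← Real.log_pow, Real.exp_log (by positivity)]
    _ ≤ Real.exp (Real.log N * a * Real.log N) := by
        have := Real.log_nonneg hN'
        gcongr
    _ = Real.exp (a * Real.log N ^ 2) := by ring_nf

lemma eventually_rpow_one_sub_le_mul {a η : ℝ} (ha : 0 < a) (hη : 0 < η) :
    ∀ᶠ N : ℕ in atTop, (N : ℝ) ^ (1 - a) ≤ η * N := by
  have hdecay : Tendsto (fun N : ℕ => (N : ℝ) ^ (-a)) atTop (nhds 0) :=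
    (tendsto_rpow_neg_atTop ha).comp tendsto_natCast_atTop_atTop
  filter_upwards [hdecay.eventually_le_const hη, eventually_gt_atTop 0] with N hsmall hN
  have hN' : (0 : ℝ) < N := by exact_mod_cast hN
  rw [sub_eq_neg_add, Real.rpow_add hN', Real.rpow_one]
  gcongr

/-! ### Convergence to the quasistationary distribution -/

lemma IsQuasistationary.abs_killHeat_tstar_div_sub_le {d N R : ℕ} [NeZero N] (hN : 4 ≤ N)
    {η : ℝ} (hη : η < 1 / 4) (hR : R ≤ η * N) {σ : Torus d N → ℝ} {l : ℝ}
    (h : IsQuasistationary (torusBall 0 (R : ℝ)) σ l) {x : Torus d N}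
    (hx : x ∉ torusBall 0 (R : ℝ)) (y : Torus d N) :
    |killHeat (torusBall 0 (R : ℝ)) (tstar N) x y /
        ∑ z, killHeat (torusBall 0 (R : ℝ)) (tstar N) x z - σ y| ≤
      N ^ (d + 1) * Real.exp (-(2 * (frequencyGap η / (d + 1)) * Real.log N ^ 2)) := by
  obtain ⟨i, hi⟩ := exists_two_div_le_slabSine hx
  have hd : d ≠ 0 := i.pos.ne'
  have : (0 : ℝ) < d := by exact_mod_cast i.pos
  have hN' : (4 : ℝ) ≤ N := by exact_mod_cast hN
  have hκ := frequencyGap_pos hη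
  have hR4 : (R : ℝ) ≤ N / 4 := hR.trans (by nlinarith)
  have hR3 : 3 * R < N := by
    have : 3 * (R : ℝ) < N := by linarith
    exact_mod_cast this
  have hgap := frequencyGap_div_le_modeRate_sub d hN hη hR
  have hrate : 0 ≤ 2 * frequencyGap η / (d * N ^ 2) := by positivity
  have hl := h.one_sub_modeRate_le hR3
  have hq : modeRate d (Real.pi / (N - 2 * R)) ≤ 1 := by
    have hwidth : (2 : ℝ) ≤ N - 2 * R := by linarith
    exact modeRate_le_one d (by positivity)
      (div_le_div_of_nonneg_left Real.pi_pos.le two_pos hwidth)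
  refine (h.abs_killHeat_div_sub_le hd (by linarith) (sub_nonneg.mpr hq)
    (fun z => slabSine_le_one N R (z i)) (mul_slabSine_le_killAvg hR3 i) (sq_nonneg _) hx
    (lt_of_lt_of_le (by positivity) hi) y).trans ?_
  rw [sub_sub_cancel]
  have hprefactor : ((N : ℝ) ^ d + 1) / slabSine N R (x i) ≤ N ^ (d + 1) := by
    have hpow : (1 : ℝ) ≤ N ^ d := one_le_pow₀ (by linarith)
    calc ((N : ℝ) ^ d + 1) / slabSine N R (x i) ≤ (N ^ d + N ^ d) / (2 / N) := by gcongr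
      _ = N ^ (d + 1) := by field_simp; ring
  exact mul_le_mul hprefactor (Real.exp_le_exp.mpr (neg_le_neg
    (frequencyGap_mul_log_sq_le hd hN hη hR))) (Real.exp_nonneg _) (by positivity)

theorem quasistationary_convergence_general (d : ℕ) {η : ℝ} (hη : η < 1 / 4) :
    ∃ c : ℝ, 0 < c ∧ ∃ N₀ : ℕ, ∀ N : ℕ, N₀ ≤ N → ∀ r : ℝ, 0 ≤ r → r ≤ η * N →
      ∀ σ : Torus d N → ℝ, IsQSD d N (torusBall 0 r) σ →
        ∀ x y : Torus d N, x ∉ torusBall (0 : Torus d N) r →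
          ∀ P : Measure (CTPath d N), IsCTWalk P (pointInit x) →
            |(P {ω | ctPos ω (tstar N) = y ∧ tstar N < hitT (torusBall 0 r) ω}).toReal /
                (P {ω | tstar N < hitT (torusBall 0 r) ω}).toReal - σ y| ≤
              Real.exp (-c * Real.log N ^ 2) := by
  have hc : 0 < frequencyGap η / (d + 1) := div_pos (frequencyGap_pos hη) (by positivity)
  refine ⟨frequencyGap η / (d + 1), hc, eventually_atTop.mp ?_⟩
  filter_upwards [eventually_ge_atTop 4, eventually_pow_le_exp_mul_log_sq (d + 1) hc]
    with N hN hpoly r hr hrη σ hσ x y hx P ⟨μ, ν, hμ, hν, hP⟩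
  have : NeZero N := ⟨by omega⟩
  have hzero := mem_torusBall_self (0 : Torus d N) hr
  have hd : d ≠ 0 := by
    rintro rfl
    exact hx (Subsingleton.elim 0 x ▸ hzero)
  have ht : 0 ≤ tstar N := sq_nonneg _
  obtain ⟨l, hl⟩ := hσ.exists_isQuasistationary (by omega)
  rw [← measureReal_def, ← measureReal_def, hP,
    measureReal_ctPos_event hd (by omega) ⟨0, hzero⟩ hx hμ hν ht,
    measureReal_lt_hitT hd (by omega) ⟨0, hzero⟩ hx hμ hν ht]
  rw [torusBall_eq_torusBall_floor 0 hr] at hl hx ⊢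
  refine (hl.abs_killHeat_tstar_div_sub_le hN hη ((Nat.floor_le hr).trans hrη) hx y).trans ?_
  calc (N : ℝ) ^ (d + 1) * Real.exp (-(2 * (frequencyGap η / (d + 1)) * Real.log N ^ 2))
      ≤ Real.exp (frequencyGap η / (d + 1) * Real.log N ^ 2) *
          Real.exp (-(2 * (frequencyGap η / (d + 1)) * Real.log N ^ 2)) := by gcongr
    _ = Real.exp (-(frequencyGap η / (d + 1)) * Real.log N ^ 2) := by
        rw [← Real.exp_add]
        ring_nf

/-- **Lemma (convergence to the quasistationary distribution).**
With `B = B(0, N^{1−ε/2})` and `t_* = (N log N)²`, for all large `N`: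
`sup_{x,y ∉ B} | P_x[Y_{t_*} = y | H_B > t_*] − σ(y) | ≤ e^{−c (log N)²}`. -/
theorem quasistationary_convergence
    (d : ℕ) (hd : 3 ≤ d) (ε : ℝ) (hε : 0 < ε ∧ ε < 1) :
    ∃ c : ℝ, 0 < c ∧ ∃ N₀ : ℕ, ∀ N : ℕ, N₀ ≤ N →
      ∀ σ : Torus d N → ℝ,
        IsQSD d N (torusBall (0 : Torus d N) ((N : ℝ) ^ (1 - ε / 2))) σ →
        ∀ x y : Torus d N,
          x ∉ torusBall (0 : Torus d N) ((N : ℝ) ^ (1 - ε / 2)) →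
          y ∉ torusBall (0 : Torus d N) ((N : ℝ) ^ (1 - ε / 2)) →
          ∀ P : Measure (CTPath d N), IsCTWalk P (pointInit x) →
            |(P {ω | ctPos ω (tstar N) = y ∧
                  tstar N < hitT (torusBall (0 : Torus d N) ((N : ℝ) ^ (1 - ε / 2))) ω}).toReal /
                (P {ω | tstar N <
                  hitT (torusBall (0 : Torus d N) ((N : ℝ) ^ (1 - ε / 2))) ω}).toReal -
              σ y| ≤ Real.exp (-c * (Real.log N) ^ 2) := by
  obtain ⟨c, hc, N₀, h⟩ := quasistationary_convergence_general d (η := 1 / 8) (by norm_num)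
  obtain ⟨N₁, hradius⟩ := eventually_atTop.mp
    (eventually_rpow_one_sub_le_mul (half_pos hε.1) (by norm_num : (0 : ℝ) < 1 / 8))
  exact ⟨c, hc, max N₀ N₁, fun N hN σ hσ x y hx _ P hP =>
    h N (le_of_max_le_left hN) _ (by positivity) (hradius N (le_of_max_le_right hN))
      σ hσ x y hx P hP⟩

end Frag
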